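/- arXiv:0901.0929 — 2 statements merged into one kernel-verified Lean document; each statement's English description precedes it below -/
import Mathlib

section
/- Let Ω = {0,1,2,3}^ℕ carry the product of the uniform probability measures on {0,1,2,3}, and define U_B : Ω × Ω → {0,1} by U_B(x,y) = 1 if x ≠ y and x_k − y_k ≡ ±1 (mod 4), where k is the smallest index with x_k ≠ y_k, and U_B(x,y) = 0 otherwise (U_B is the infinite lexicographic power of the 4-cycle C₄). Then U_B is finitely forcible: there exist finitely many finite simple graphs F₁,…,F_m such that every graphon W ∈ 𝒲₀ with t(F_i,W) = t(F_i,U_B) for i = 1,…,m satisfies t(F,W) = t(F,U_B) for every finite simple graph F, where t(F,U_B) = ∫_{Ω^{V(F)}} ∏_{ij∈E(F)} U_B(x_i,x_j) ∏_{i∈V(F)} dx_i with respect to the product measure on Ω^{V(F)}. -/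
open MeasureTheory
open scoped Classical

noncomputable section

/-- The unit interval `[0,1]` as a subset of `ℝ`. -/
def I01 : Set ℝ := Set.Icc 0 1

/-- The cube `[0,1]^n`. -/
def cube (n : ℕ) : Set (Fin n → ℝ) := Set.univ.pi fun _ => I01

/-- `W` belongs to `𝒲`: a bounded symmetric measurable function on `[0,1]²`. -/
def memW (W : ℝ → ℝ → ℝ) : Prop :=
  Measurable (Function.uncurry W) ∧
  (∀ x ∈ I01, ∀ y ∈ I01, W x y = W y x) ∧
  ∃ C : ℝ, ∀ x ∈ I01, ∀ y ∈ I01, |W x y| ≤ C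

/-- `W` belongs to `𝒲₀`: a graphon, i.e. symmetric measurable with values in `[0,1]`. -/
def memW0 (W : ℝ → ℝ → ℝ) : Prop :=
  Measurable (Function.uncurry W) ∧
  (∀ x ∈ I01, ∀ y ∈ I01, W x y = W y x) ∧
  ∀ x ∈ I01, ∀ y ∈ I01, W x y ∈ Set.Icc (0 : ℝ) 1

/-- Homomorphism density `t(F,W)` of a finite simple graph `F` in `W`. -/
def homDensity {n : ℕ} (F : SimpleGraph (Fin n)) (W : ℝ → ℝ → ℝ) : ℝ :=
  ∫ x in cube n,
    ∏ p ∈ Finset.univ.filter (fun p : Fin n × Fin n => p.1 < p.2 ∧ F.Adj p.1 p.2),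
      W (x p.1) (x p.2)

/-- Two kernels are weakly isomorphic if all their homomorphism densities agree. -/
def WeaklyIsomorphic (U W : ℝ → ℝ → ℝ) : Prop :=
  ∀ (n : ℕ) (F : SimpleGraph (Fin n)), homDensity F U = homDensity F W

/-- `W` is finitely forcible within the class `A`. -/
def FinitelyForcible (A : (ℝ → ℝ → ℝ) → Prop) (W : ℝ → ℝ → ℝ) : Prop :=
  A W ∧ ∃ (k : ℕ) (n : Fin k → ℕ) (F : ∀ i, SimpleGraph (Fin (n i))),
    ∀ U, A U → (∀ i, homDensity (F i) U = homDensity (F i) W) → WeaklyIsomorphic U W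

/-- Density function `t^k(F,W)` of a `k`-labeled graph, as a function of the
labeled variables; the graph has `k` labeled and `m` unlabeled vertices. -/
def labDensity {k m : ℕ} (F : SimpleGraph (Fin (k + m))) (W : ℝ → ℝ → ℝ)
    (x : Fin k → ℝ) : ℝ :=
  ∫ y in cube m,
    ∏ p ∈ Finset.univ.filter
        (fun p : Fin (k + m) × Fin (k + m) => p.1 < p.2 ∧ F.Adj p.1 p.2),
      W (Fin.append x y p.1) (Fin.append x y p.2)

/-- The infinite lexicographic power of the 4-cycle `C₄`, as a 0–1 kernel on
`Ω = {0,1,2,3}^ℕ`: `U_B(x,y) = 1` iff `x ≠ y` and, at the first coordinate `k` where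
they differ, `x_k − y_k ≡ ±1 (mod 4)`. -/
def UB (x y : ℕ → Fin 4) : ℝ :=
  if h : x = y then 0
  else
    if x (Nat.find (Function.ne_iff.mp h)) - y (Nat.find (Function.ne_iff.mp h)) = 1 ∨
       x (Nat.find (Function.ne_iff.mp h)) - y (Nat.find (Function.ne_iff.mp h)) = 3
    then 1 else 0

/-- Homomorphism density `t(F, U_B)` with respect to a measure `μ` on `Ω`,
integrating over `Ω^{V(F)}` with the product measure. -/
def tUB {n : ℕ} (F : SimpleGraph (Fin n)) (μ : Measure (ℕ → Fin 4)) : ℝ :=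
  ∫ x : Fin n → (ℕ → Fin 4),
    ∏ p ∈ Finset.univ.filter (fun p : Fin n × Fin n => p.1 < p.2 ∧ F.Adj p.1 p.2),
      UB (x p.1) (x p.2) ∂(Measure.pi fun _ => μ)

namespace FF

/-- Homomorphism density over a general probability space. -/
def dens {X : Type} [MeasurableSpace X] {n : ℕ} (G : SimpleGraph (Fin n)) (μ : Measure X)
    (W : X → X → ℝ) : ℝ :=
  ∫ x : Fin n → X,
    ∏ p ∈ Finset.univ.filter (fun p : Fin n × Fin n => p.1 < p.2 ∧ G.Adj p.1 p.2),
      W (x p.1) (x p.2) ∂(Measure.pi fun _ => μ)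

/-- Measurable symmetric kernels with values in `[0,1]`. -/
structure Ker {X : Type} [MeasurableSpace X] (W : X → X → ℝ) : Prop where
  meas : Measurable (Function.uncurry W)
  symm : ∀ x y, W x y = W y x
  nonneg : ∀ x y, 0 ≤ W x y
  le_one : ∀ x y, W x y ≤ 1

/-- Bounded measurable functions. -/
def BM {X : Type} [MeasurableSpace X] (f : X → ℝ) : Prop :=
  Measurable f ∧ ∃ C, ∀ x, |f x| ≤ C

section BMsec
variable {X Y : Type} [MeasurableSpace X] [MeasurableSpace Y]

lemma BM.integrable {f : X → ℝ} (hf : BM f) (μ : Measure X) [IsFiniteMeasure μ] :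
    Integrable f μ := by
  obtain ⟨hm, C, hC⟩ := hf
  exact Integrable.of_bound hm.aestronglyMeasurable C (Filter.Eventually.of_forall hC)

lemma BM.comp {f : X → ℝ} (hf : BM f) {g : Y → X} (hg : Measurable g) : BM (fun y => f (g y)) :=
  ⟨hf.1.comp hg, hf.2.choose, fun y => hf.2.choose_spec (g y)⟩

lemma BM.const (c : ℝ) : BM (fun _ : X => c) := ⟨measurable_const, |c|, fun _ => le_rfl⟩

lemma BM.mul {f g : X → ℝ} (hf : BM f) (hg : BM g) : BM (fun x => f x * g x) := by
  obtain ⟨hm, C, hC⟩ := hf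
  obtain ⟨hm', C', hC'⟩ := hg
  refine ⟨hm.mul hm', C * C', fun x => ?_⟩
  rw [abs_mul]
  exact mul_le_mul (hC x) (hC' x) (abs_nonneg _) ((abs_nonneg _).trans (hC x))

lemma BM.add {f g : X → ℝ} (hf : BM f) (hg : BM g) : BM (fun x => f x + g x) := by
  obtain ⟨hm, C, hC⟩ := hf
  obtain ⟨hm', C', hC'⟩ := hg
  refine ⟨hm.add hm', C + C', fun x => ?_⟩
  exact (abs_add_le _ _).trans (add_le_add (hC x) (hC' x))

lemma BM.neg {f : X → ℝ} (hf : BM f) : BM (fun x => - f x) := by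
  obtain ⟨hm, C, hC⟩ := hf
  exact ⟨hm.neg, C, fun x => by rw [abs_neg]; exact hC x⟩

lemma BM.sub {f g : X → ℝ} (hf : BM f) (hg : BM g) : BM (fun x => f x - g x) := by
  simpa [sub_eq_add_neg] using hf.add hg.neg

lemma BM.prod {ι : Type} (s : Finset ι) {f : ι → X → ℝ} (hf : ∀ i, BM (f i)) :
    BM (fun x => ∏ i ∈ s, f i x) := by
  classical
  induction s using Finset.induction_on with
  | empty => simpa using BM.const 1
  | insert a s ha ih =>
    simp only [Finset.prod_insert ha]
    exact (hf a).mul ih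

lemma BM.int {f : X × Y → ℝ} (hf : BM f) (μ : Measure Y) [IsProbabilityMeasure μ] :
    BM (fun x => ∫ y, f (x, y) ∂μ) := by
  refine ⟨(hf.1.stronglyMeasurable.integral_prod_right').measurable, ?_⟩
  obtain ⟨hm, C, hC⟩ := hf
  refine ⟨C, fun x => ?_⟩
  have := norm_integral_le_of_norm_le_const (μ := μ) (f := fun y => f (x, y)) (C := C)
    (Filter.Eventually.of_forall fun y => hC (x, y))
  simpa using this

lemma BM.ker {W : X → X → ℝ} (hW : Ker W) : BM (Function.uncurry W) :=
  ⟨hW.meas, 1, fun p => abs_le.2 ⟨by linarith [hW.nonneg p.1 p.2, show Function.uncurry W p = W p.1 p.2 from rfl], hW.le_one p.1 p.2⟩⟩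

lemma BM.ker2 {W : X → X → ℝ} (hW : Ker W) {f g : Y → X} (hf : Measurable f) (hg : Measurable g) :
    BM (fun y => W (f y) (g y)) :=
  (BM.ker hW).comp (hf.prodMk hg)

lemma BM.ae_zero {f : X → ℝ} (hf : BM f) {μ : Measure X} [IsProbabilityMeasure μ]
    (h0 : ∀ x, 0 ≤ f x) (hi : ∫ x, f x ∂μ = 0) : ∀ᵐ x ∂μ, f x = 0 :=
  (integral_eq_zero_iff_of_nonneg h0 (hf.integrable μ)).1 hi

lemma measurable_cons (n : ℕ) :
    Measurable (fun p : X × (Fin n → X) => (Fin.cons p.1 p.2 : Fin (n + 1) → X)) := by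
  rw [measurable_pi_iff]
  intro i
  refine Fin.cases ?_ (fun j => ?_) i
  · simpa using measurable_fst
  · exact (measurable_pi_apply j).comp measurable_snd

lemma mp_cons (μ : Measure X) [IsProbabilityMeasure μ] (n : ℕ) :
    MeasurePreserving (fun p : X × (Fin n → X) => (Fin.cons p.1 p.2 : Fin (n + 1) → X))
      (μ.prod (Measure.pi fun _ => μ)) (Measure.pi fun _ => μ) := by
  have := (measurePreserving_piFinSuccAbove (fun _ : Fin (n + 1) => μ) 0).symm
  convert this using 1
  funext p i
  refine Fin.cases ?_ (fun j => ?_) i <;> rfl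

lemma int_cons {μ : Measure X} [IsProbabilityMeasure μ] {n : ℕ} {f : (Fin (n + 1) → X) → ℝ}
    (hf : BM f) :
    ∫ x, f x ∂(Measure.pi fun _ => μ) =
      ∫ z, ∫ x, f (Fin.cons z x) ∂(Measure.pi fun _ => μ) ∂μ := by
  rw [← (mp_cons μ n).map_eq, integral_map (measurable_cons n).aemeasurable
    hf.1.aestronglyMeasurable]
  exact integral_prod _ ((hf.comp (measurable_cons n)).integrable _)

lemma int_cons' {μ : Measure X} [IsProbabilityMeasure μ] {n : ℕ} {f : (Fin (n + 1) → X) → ℝ}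
    (hf : BM f) :
    ∫ x, f x ∂(Measure.pi fun _ => μ) =
      ∫ x, ∫ z, f (Fin.cons z x) ∂μ ∂(Measure.pi fun _ => μ) := by
  rw [← (mp_cons μ n).map_eq, integral_map (measurable_cons n).aemeasurable
    hf.1.aestronglyMeasurable]
  exact integral_prod_symm _ ((hf.comp (measurable_cons n)).integrable _)

lemma int_zero {μ : Measure X} [IsProbabilityMeasure μ] (f : (Fin 0 → X) → ℝ) :
    ∫ x, f x ∂(Measure.pi fun _ => μ) = f Fin.elim0 := by
  have : f = fun _ => f Fin.elim0 := by
    funext x; congr; exact Subsingleton.elim _ _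
  rw [this]; simp

lemma int_six {μ : Measure X} [IsProbabilityMeasure μ] {f : (Fin 6 → X) → ℝ} (hf : BM f) :
    ∫ x, f x ∂(Measure.pi fun _ => μ) =
      ∫ a, ∫ b, ∫ c, ∫ d, ∫ e, ∫ g, f ![a, b, c, d, e, g] ∂μ ∂μ ∂μ ∂μ ∂μ ∂μ := by
  have mc : ∀ (n : ℕ) (z : X), Measurable (fun x : Fin n → X => (Fin.cons z x : Fin (n + 1) → X)) :=
    fun n z => (measurable_cons n).comp (measurable_const.prodMk measurable_id)
  rw [int_cons hf]
  refine integral_congr_ae (Filter.Eventually.of_forall fun a => ?_)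
  have h1 := hf.comp (mc 5 a)
  simp only
  rw [int_cons h1]
  refine integral_congr_ae (Filter.Eventually.of_forall fun b => ?_)
  have h2 := h1.comp (mc 4 b)
  simp only
  rw [int_cons h2]
  refine integral_congr_ae (Filter.Eventually.of_forall fun c => ?_)
  have h3 := h2.comp (mc 3 c)
  simp only
  rw [int_cons h3]
  refine integral_congr_ae (Filter.Eventually.of_forall fun d => ?_)
  have h4 := h3.comp (mc 2 d)
  simp only
  rw [int_cons h4]
  refine integral_congr_ae (Filter.Eventually.of_forall fun e => ?_)
  have h5 := h4.comp (mc 1 e)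
  simp only
  rw [int_cons h5]
  refine integral_congr_ae (Filter.Eventually.of_forall fun g => ?_)
  simp only
  rw [int_zero]
  congr 1

end BMsec

/-! ### Multilinear polynomials -/

section MLsec
variable {ι κ : Type}

/-- Square-free monomial. -/
def mono (T : Finset ι) : (ι → ℝ) → ℝ := fun w => ∏ e ∈ T, w e

/-- Multilinear polynomials in the variables from `S`. -/
def ML (S : Set ι) : Submodule ℝ ((ι → ℝ) → ℝ) :=
  Submodule.span ℝ (mono '' {T : Finset ι | (T : Set ι) ⊆ S})

lemma ML_mono {S T : Set ι} (h : S ⊆ T) {f : (ι → ℝ) → ℝ} (hf : f ∈ ML S) : f ∈ ML T :=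
  Submodule.span_mono (Set.image_mono fun _ hU => Set.Subset.trans hU h) hf

lemma ML_const (S : Set ι) (c : ℝ) : (fun _ => c) ∈ ML S := by
  have : (fun _ : ι → ℝ => c) = c • mono (∅ : Finset ι) := by
    funext w; simp [mono]
  rw [this]
  exact Submodule.smul_mem _ _ (Submodule.subset_span ⟨∅, by simp, rfl⟩)

lemma ML_var (e : ι) : (fun w => w e) ∈ ML ({e} : Set ι) :=
  Submodule.subset_span ⟨{e}, by simp, by funext w; simp [mono]⟩

lemma ML_mul {S T : Set ι} (h : Disjoint S T) {f g : (ι → ℝ) → ℝ} (hf : f ∈ ML S)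
    (hg : g ∈ ML T) : (fun w => f w * g w) ∈ ML (S ∪ T) := by
  have h1 : f * g ∈ ML S * ML T := Submodule.mul_mem_mul hf hg
  rw [ML, ML, Submodule.span_mul_span] at h1
  refine Submodule.span_mono ?_ h1
  rintro _ ⟨_, ⟨A, hA, rfl⟩, _, ⟨B, hB, rfl⟩, rfl⟩
  refine ⟨A ∪ B, ?_, ?_⟩
  · simp only [Set.mem_ofPred_eq, Finset.coe_union]
    exact Set.union_subset_union hA hB
  · have : Disjoint A B := by
      rw [← Finset.disjoint_coe]
      exact Set.disjoint_of_subset hA hB h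
    funext w
    simp [mono, Finset.prod_union this]

lemma ML_comp {S : Set ι} (e : ι → κ) (he : Function.Injective e) {f : (ι → ℝ) → ℝ}
    (hf : f ∈ ML S) : (fun w : κ → ℝ => f (fun i => w (e i))) ∈ ML (e '' S) := by
  refine Submodule.span_induction (p := fun f _ => (fun w : κ → ℝ => f (fun i => w (e i))) ∈ ML (e '' S))
    ?_ ?_ ?_ ?_ hf
  · rintro _ ⟨T, hT, rfl⟩
    refine Submodule.subset_span ⟨T.image e, ?_, ?_⟩
    · simp only [Set.mem_ofPred_eq, Finset.coe_image]
      exact Set.image_mono hT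
    · funext w
      simp only [mono]
      rw [Finset.prod_image (fun _ _ _ _ h => he h)]
  · exact (ML (e '' S)).zero_mem
  · intro f g _ _ hf hg
    exact (ML (e '' S)).add_mem hf hg
  · intro c f _ hf
    exact (ML (e '' S)).smul_mem c hf

lemma ML_sub {S : Set ι} {f g : (ι → ℝ) → ℝ} (hf : f ∈ ML S) (hg : g ∈ ML S) :
    (fun w => f w - g w) ∈ ML S := (ML S).sub_mem hf hg

lemma ML_smul {S : Set ι} (c : ℝ) {f : (ι → ℝ) → ℝ} (hf : f ∈ ML S) :
    (fun w => c * f w) ∈ ML S := (ML S).smul_mem c hf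

end MLsec

variable {X Y : Type} [MeasurableSpace X] [MeasurableSpace Y]

/-- The values of the kernel on all pairs. -/
def ev (W : X → X → ℝ) {n : ℕ} (x : Fin n → X) : Fin n × Fin n → ℝ := fun p => W (x p.1) (x p.2)

lemma ML_int {n : ℕ} {μ : Measure X} [IsProbabilityMeasure μ] {ν : Measure Y}
    [IsProbabilityMeasure ν] {W : X → X → ℝ} {V : Y → Y → ℝ} (hW : Ker W) (hV : Ker V)
    (hG : ∀ G : SimpleGraph (Fin n), dens G μ W = dens G ν V)
    {f : (Fin n × Fin n → ℝ) → ℝ} (hf : f ∈ ML {p : Fin n × Fin n | p.1 < p.2}) :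
    BM (fun x : Fin n → X => f (ev W x)) ∧ BM (fun x : Fin n → Y => f (ev V x)) ∧
    ∫ x, f (ev W x) ∂(Measure.pi fun _ => μ) = ∫ x, f (ev V x) ∂(Measure.pi fun _ => ν) := by
  refine Submodule.span_induction (p := fun f _ =>
    BM (fun x : Fin n → X => f (ev W x)) ∧ BM (fun x : Fin n → Y => f (ev V x)) ∧
    ∫ x, f (ev W x) ∂(Measure.pi fun _ => μ) = ∫ x, f (ev V x) ∂(Measure.pi fun _ => ν))
    ?_ ?_ ?_ ?_ hf
  · rintro _ ⟨T, hT, rfl⟩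
    refine ⟨?_, ?_, ?_⟩
    · exact BM.prod T fun p => BM.ker2 hW (measurable_pi_apply _) (measurable_pi_apply _)
    · exact BM.prod T fun p => BM.ker2 hV (measurable_pi_apply _) (measurable_pi_apply _)
    · obtain ⟨G, hGT⟩ : ∃ G : SimpleGraph (Fin n), ∀ i j, i < j ∧ G.Adj i j ↔ (i, j) ∈ T := by
        refine ⟨SimpleGraph.fromRel fun i j => (i, j) ∈ T, fun i j => ?_⟩
        simp only [SimpleGraph.fromRel_adj]
        constructor
        · rintro ⟨h1, h2, h3 | h3⟩
          · exact h3
          · have : j < i := hT h3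
            omega
        · intro h
          have : i < j := hT h
          exact ⟨this, ne_of_lt this, Or.inl h⟩
      have := hG G
      have hT' : Finset.univ.filter (fun p : Fin n × Fin n => p.1 < p.2 ∧ G.Adj p.1 p.2) = T := by
        ext ⟨i, j⟩
        simp only [Finset.mem_filter, Finset.mem_univ, true_and]
        exact hGT i j
      simp only [dens, hT'] at this
      exact this
  · refine ⟨BM.const 0, BM.const 0, by simp⟩
  · rintro f g _ _ ⟨h1, h2, h3⟩ ⟨h4, h5, h6⟩
    refine ⟨h1.add h4, h2.add h5, ?_⟩
    simp only [Pi.add_apply]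
    rw [integral_add (h1.integrable _) (h4.integrable _), integral_add (h2.integrable _)
      (h5.integrable _), h3, h6]
  · rintro c f _ ⟨h1, h2, h3⟩
    refine ⟨(BM.const c).mul h1, (BM.const c).mul h2, ?_⟩
    simp only [Pi.smul_apply, smul_eq_mul]
    rw [integral_const_mul, integral_const_mul, h3]

/-- The five kernel values used in the test polynomials. -/
def vec (W : X → X → ℝ) (a b c d : X) : Fin 5 → ℝ := ![W a c, W b c, W a d, W b d, W c d]

lemma BM_vec {W : X → X → ℝ} (hW : Ker W) {h : (Fin 5 → ℝ) → ℝ}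
    (hh : h ∈ ML (Set.univ : Set (Fin 5))) :
    BM (fun p : ((X × X) × X) × X => h (vec W p.1.1.1 p.1.1.2 p.1.2 p.2)) := by
  refine Submodule.span_induction (p := fun h _ =>
    BM (fun p : ((X × X) × X) × X => h (vec W p.1.1.1 p.1.1.2 p.1.2 p.2))) ?_ ?_ ?_ ?_ hh
  · rintro _ ⟨T, hT, rfl⟩
    refine BM.prod T fun p => ?_
    fin_cases p
    · exact BM.ker2 hW (f := fun p : ((X × X) × X) × X => p.1.1.1) (g := fun p => p.1.2) (by fun_prop) (by fun_prop)
    · exact BM.ker2 hW (f := fun p : ((X × X) × X) × X => p.1.1.2) (g := fun p => p.1.2) (by fun_prop) (by fun_prop)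
    · exact BM.ker2 hW (f := fun p : ((X × X) × X) × X => p.1.1.1) (g := fun p => p.2) (by fun_prop) (by fun_prop)
    · exact BM.ker2 hW (f := fun p : ((X × X) × X) × X => p.1.1.2) (g := fun p => p.2) (by fun_prop) (by fun_prop)
    · exact BM.ker2 hW (f := fun p : ((X × X) × X) × X => p.1.2) (g := fun p => p.2) (by fun_prop) (by fun_prop)
  · exact BM.const 0
  · intro f g _ _ hf hg; exact hf.add hg
  · intro c f _ hf; exact (BM.const c).mul hf

def e1 : Fin 5 → Fin 6 × Fin 6 := ![(0,2),(1,2),(0,3),(1,3),(2,3)]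
def e2 : Fin 5 → Fin 6 × Fin 6 := ![(0,4),(1,4),(0,5),(1,5),(4,5)]

/-- The main transfer principle. -/
lemma transfer {μ : Measure X} [IsProbabilityMeasure μ] {ν : Measure Y}
    [IsProbabilityMeasure ν] {W : X → X → ℝ} {V : Y → Y → ℝ} (hW : Ker W) (hV : Ker V)
    (hG : ∀ G : SimpleGraph (Fin 6), dens G μ W = dens G ν V)
    (α β : ℝ) (hq : ∀ t, 0 ≤ t → t ≤ 1 → 0 ≤ α - β * t)
    {h : (Fin 5 → ℝ) → ℝ} (hh : h ∈ ML (Set.univ : Set (Fin 5)))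
    (h0 : ∀ᵐ a ∂ν, ∀ᵐ b ∂ν, α - β * V a b = 0 ∨ ∫ c, ∫ d, h (vec V a b c d) ∂ν ∂ν = 0) :
    ∀ᵐ a ∂μ, ∀ᵐ b ∂μ, α - β * W a b = 0 ∨ ∫ c, ∫ d, h (vec W a b c d) ∂μ ∂μ = 0 := by
  let f : (Fin 6 × Fin 6 → ℝ) → ℝ := fun w =>
    ((α - β * w (0,1)) * h (fun i => w (e1 i))) * h (fun i => w (e2 i))
  have hf : f ∈ ML {p : Fin 6 × Fin 6 | p.1 < p.2} := by
    have i1 : Function.Injective e1 := by decide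
    have i2 : Function.Injective e2 := by decide
    have := ML_mul (S := {(0,1)} ∪ e1 '' Set.univ) (T := e2 '' Set.univ) ?_
      (ML_mul (S := {(0,1)}) (T := e1 '' Set.univ) ?_
        (ML_sub (ML_const {(0,1)} α) (ML_smul β (ML_var ((0,1) : Fin 6 × Fin 6))))
        (ML_comp e1 i1 hh)) (ML_comp e2 i2 hh)
    · refine ML_mono ?_ this
      rintro p ((hp | ⟨i, -, rfl⟩) | ⟨i, -, rfl⟩)
      · rw [Set.mem_singleton_iff] at hp; subst hp; decide
      · revert i; decide
      · revert i; decide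
    · rw [Set.disjoint_left]
      rintro p (hp | ⟨i, -, rfl⟩) ⟨j, -, hj⟩
      · rw [Set.mem_singleton_iff] at hp; subst hp; revert j; decide
      · revert i j; decide
    · rw [Set.disjoint_left]
      rintro p hp ⟨j, -, hj⟩
      rw [Set.mem_singleton_iff] at hp; subst hp; revert j; decide
  obtain ⟨b1, b2, heq⟩ := ML_int hW hV hG hf
  have key : ∀ {Z : Type} [MeasurableSpace Z] (ρ : Measure Z) [IsProbabilityMeasure ρ] (U : Z → Z → ℝ)
      (hb : BM (fun x : Fin 6 → Z => f (ev U x))),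
      ∫ x, f (ev U x) ∂(Measure.pi fun _ => ρ) =
      ∫ a, ∫ b, (α - β * U a b) * (∫ c, ∫ d, h (vec U a b c d) ∂ρ ∂ρ) ^ 2 ∂ρ ∂ρ := by
    intro Z _ ρ _ U hb
    rw [int_six hb]
    congr 1; funext a; congr 1; funext b
    have : ∀ c d e g : Z, f (ev U ![a, b, c, d, e, g]) =
        ((α - β * U a b) * h (vec U a b c d)) * h (vec U a b e g) := by
      intro c d e g
      simp only [f, ev]
      congr 2
      · congr 1; funext i; fin_cases i <;> rfl
      · funext i; fin_cases i <;> rfl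
    simp only [this, integral_const_mul, integral_mul_const]
    ring
  rw [key μ W b1, key ν V b2] at heq
  have hz : ∫ a, ∫ b, (α - β * V a b) * (∫ c, ∫ d, h (vec V a b c d) ∂ν ∂ν) ^ 2 ∂ν ∂ν = 0 := by
    apply integral_eq_zero_of_ae
    filter_upwards [h0] with a ha
    apply integral_eq_zero_of_ae
    filter_upwards [ha] with b hb
    rcases hb with hb | hb <;> simp [hb]
  rw [hz] at heq
  have B : BM (fun p : X × X => (α - β * W p.1 p.2) *
      (∫ c, ∫ d, h (vec W p.1 p.2 c d) ∂μ ∂μ) ^ 2) := by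
    have H := ((BM_vec hW hh).int μ).int μ
    have Q : BM (fun p : X × X => α - β * W p.1 p.2) :=
      (BM.const α).sub ((BM.const β).mul (BM.ker2 hW measurable_fst measurable_snd))
    have := Q.mul (H.mul H)
    simpa [pow_two] using this
  have nn : ∀ a b, 0 ≤ (α - β * W a b) * (∫ c, ∫ d, h (vec W a b c d) ∂μ ∂μ) ^ 2 :=
    fun a b => mul_nonneg (hq _ (hW.nonneg _ _) (hW.le_one _ _)) (sq_nonneg _)
  have A1 := (B.int μ).ae_zero (fun a => integral_nonneg fun b => nn a b) heq
  filter_upwards [A1] with a ha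
  have Ba := B.comp (g := fun b : X => (a, b)) (by fun_prop)
  have := Ba.ae_zero (nn a) ha
  filter_upwards [this] with b hb
  rcases mul_eq_zero.1 hb with h | h
  · exact Or.inl h
  · exact Or.inr (by simpa using h)

end FF

namespace FF
variable {X Y : Type} [MeasurableSpace X] [MeasurableSpace Y]

/-- The ultrametric condition for separation depths. -/
def Ult (p q r : ℕ) : Prop := min p q ≤ r ∧ min q r ≤ p ∧ min p r ≤ q

/-- `W` is the kernel of a balanced alternating binary tree with separation depth `δ`. -/
structure TS (μ : Measure X) (W : X → X → ℝ) (δ : X → X → ℕ) : Prop where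
  meas : Measurable (Function.uncurry δ)
  symm : ∀ x y, δ x y = δ y x
  par : ∀ᵐ x ∂μ, ∀ᵐ y ∂μ, W x y = if Even (δ x y) then 1 else 0
  mass : ∀ᵐ x ∂μ, ∀ d : ℕ, μ.real {y | d ≤ δ x y} = (1 / 2) ^ d
  ult : ∀ᵐ x ∂μ, ∀ᵐ y ∂μ, ∀ᵐ z ∂μ, Ult (δ x y) (δ x z) (δ y z)

/-- Normalised codegree distance. -/
def rr (μ : Measure X) (W : X → X → ℝ) (x y : X) : ℝ := 2 - 3 * ∫ z, W x z * W y z ∂μ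

/-- The finitely many conditions which characterise the kernel. -/
structure Ax (μ : Measure X) (W : X → X → ℝ) : Prop where
  deg : ∀ᵐ x ∂μ, ∫ z, W x z ∂μ = 2 / 3
  p1 : ∀ᵐ a ∂μ, ∀ᵐ b ∂μ, ∀ᵐ c ∂μ, ∀ᵐ d ∂μ,
    W a b * ((1 - W a c) * W b c * (1 - W a d) * (1 - W b d) * W c d) = 0
  p2 : ∀ᵐ a ∂μ, ∀ᵐ b ∂μ, ∀ᵐ c ∂μ, ∀ᵐ d ∂μ,
    (1 - W a b) * (W a c * (1 - W b c) * W a d * W b d * (1 - W c d)) = 0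
  p3 : ∀ᵐ a ∂μ, ∀ᵐ b ∂μ, ∀ᵐ c ∂μ, ∀ᵐ d ∂μ,
    (1 - W a b) * (W a c * (1 - W b c) * (1 - W a d) * W b d * W c d) = 0
  p4 : ∀ᵐ a ∂μ, ∀ᵐ b ∂μ, ∀ᵐ c ∂μ, ∀ᵐ d ∂μ,
    W a b * (W a c * (1 - W b c) * (1 - W a d) * W b d * (1 - W c d)) = 0
  k1 : ∀ᵐ x ∂μ, ∀ᵐ y ∂μ, W x y = 0 ∨
    ∫ z, (1 - W x z) * W y z * rr μ W x z ∂μ = 2 / 15 * rr μ W x y ^ 2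
  k0 : ∀ᵐ x ∂μ, ∀ᵐ y ∂μ, 1 - W x y = 0 ∨
    ∫ z, W x z * (1 - W y z) * rr μ W x z ∂μ = 2 / 15 * rr μ W x y ^ 2
  m : ∀ᵐ x ∂μ, ∫ z, W x z * rr μ W x z ∂μ = 8 / 15

section basic
variable {μ : Measure X} [IsProbabilityMeasure μ] {W : X → X → ℝ}

lemma Ker.bm1 (hW : Ker W) (x : X) : BM (fun z => W x z) :=
  BM.ker2 hW measurable_const measurable_id

lemma BM_rr2 (hW : Ker W) : BM (fun p : X × X => rr μ W p.1 p.2) := by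
  have h : BM (fun p : (X × X) × X => W p.1.1 p.2 * W p.1.2 p.2) :=
    (BM.ker2 hW (by fun_prop) (by fun_prop)).mul (BM.ker2 hW (by fun_prop) (by fun_prop))
  exact (BM.const 2).sub ((BM.const 3).mul (h.int μ))

lemma BM_rr (hW : Ker W) (x : X) : BM (fun z => rr μ W x z) :=
  (BM_rr2 hW).comp (g := fun z => (x, z)) (by fun_prop)

lemma rr_symm (x y : X) : rr μ W x y = rr μ W y x := by
  unfold rr; congr 3; funext z; ring

lemma bint {f : X → ℝ} (hf : BM f) : Integrable f μ := hf.integrable μ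

lemma rr_eq (hW : Ker W) {x y : X} (hx : ∫ z, W x z ∂μ = 2 / 3) :
    ∫ z, W x z * (1 - W y z) ∂μ = rr μ W x y / 3 := by
  have : ∀ z, W x z * (1 - W y z) = W x z - W x z * W y z := fun z => by ring
  simp only [this]
  rw [integral_sub (bint (hW.bm1 x)) (bint ((hW.bm1 x).mul (hW.bm1 y))), hx, rr]
  ring

lemma rr_eq' (hW : Ker W) {x y : X} (hy : ∫ z, W y z ∂μ = 2 / 3) :
    ∫ z, (1 - W x z) * W y z ∂μ = rr μ W x y / 3 := by
  rw [rr_symm, ← rr_eq hW hy]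
  congr 1; funext z; ring

end basic

/-! ### Consequences of the tree structure -/
section tree
variable {μ : Measure X} [IsProbabilityMeasure μ] {W : X → X → ℝ} {δ : X → X → ℕ}

lemma law {f : X → ℕ} (hf : Measurable f) (hm : ∀ d : ℕ, μ.real {y | d ≤ f y} = (1 / 2) ^ d)
    (g : ℕ → ℝ) (hg : ∃ C, ∀ n, |g n| ≤ C) :
    ∫ y, g (f y) ∂μ = ∑' j, (1 / 2 : ℝ) ^ (j + 1) * g j := by
  have hg' : Measurable g := measurable_of_countable g
  have : ∫ y, g (f y) ∂μ = ∫ j, g j ∂(μ.map f) :=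
    (integral_map hf.aemeasurable hg'.aestronglyMeasurable).symm
  have hp : IsProbabilityMeasure (μ.map f) := Measure.isProbabilityMeasure_map hf.aemeasurable
  rw [this, integral_countable]
  · congr 1; funext j
    rw [smul_eq_mul]; congr 1
    rw [map_measureReal_apply hf (measurableSet_singleton j)]
    have h1 : f ⁻¹' {j} = {y | j ≤ f y} \ {y | j + 1 ≤ f y} := by
      ext y; simp only [Set.mem_preimage, Set.mem_singleton_iff, Set.mem_sdiff, Set.mem_ofPred_eq]; omega
    rw [h1, measureReal_sdiff]
    · rw [hm, hm]; ring
    · intro y hy; simp only [Set.mem_ofPred_eq] at *; omega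
    · exact measurableSet_le measurable_const hf
  · exact (show BM g from ⟨hg', hg⟩).integrable _

lemma geo {f : X → ℕ} (hf : Measurable f) (hm : ∀ d : ℕ, μ.real {y | d ≤ f y} = (1 / 2) ^ d)
    (j0 : ℕ) {θ : ℝ} (h0 : 0 ≤ θ) (h1 : θ ≤ 1) :
    ∫ y, (if j0 ≤ f y ∧ Even (f y + j0) then θ ^ (f y) else 0) ∂μ =
      (θ / 2) ^ j0 / 2 / (1 - θ ^ 2 / 4) := by
  rw [law hf hm (fun n => if j0 ≤ n ∧ Even (n + j0) then θ ^ n else 0)]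
  · have hi : Function.Injective (fun i : ℕ => j0 + 2 * i) := by
      intro a b h; simp only at h; omega
    rw [← hi.tsum_eq]
    · have : ∀ i : ℕ, (1 / 2 : ℝ) ^ (j0 + 2 * i + 1) *
          (if j0 ≤ j0 + 2 * i ∧ Even (j0 + 2 * i + j0) then θ ^ (j0 + 2 * i) else 0) =
          (θ / 2) ^ j0 / 2 * (θ ^ 2 / 4) ^ i := by
        intro i
        rw [if_pos ⟨by omega, ⟨j0 + i, by ring⟩⟩, show θ ^ 2 / 4 = (θ / 2) ^ 2 by ring, ← pow_mul,
          pow_succ (1 / 2 : ℝ), show θ / 2 = 1 / 2 * θ by ring, mul_pow, mul_pow, pow_add, pow_add]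
        ring
      simp only [this]
      rw [tsum_mul_left, tsum_geometric_of_lt_one (by positivity) (by nlinarith)]
      ring
    · intro n hn
      simp only [Function.mem_support, ne_eq, mul_eq_zero, not_or] at hn
      have : j0 ≤ n ∧ Even (n + j0) := by
        by_contra h; exact hn.2 (if_neg h)
      obtain ⟨h2, k, hk⟩ := this
      exact ⟨k - j0, by simp only; omega⟩
  · refine ⟨1, fun n => ?_⟩
    split_ifs
    · rw [abs_of_nonneg (by positivity)]; exact pow_le_one₀ h0 h1
    · simp

lemma TS.meas1 (h : TS μ W δ) (x : X) : Measurable (δ x) :=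
  h.meas.comp (measurable_const.prodMk measurable_id)

lemma TS.deg (h : TS μ W δ) : ∀ᵐ x ∂μ, ∫ z, W x z ∂μ = 2 / 3 := by
  filter_upwards [h.par, h.mass] with x hp hm
  have := geo (h.meas1 x) hm 0 (θ := 1) (by norm_num) (by norm_num)
  norm_num at this
  rw [← this]
  exact integral_congr_ae hp

/-- The pairs of points around which everything is as expected. -/
lemma TS.rr (hW : Ker W) (h : TS μ W δ) :
    ∀ᵐ x ∂μ, ∀ᵐ y ∂μ, rr μ W x y = (1 / 2) ^ (δ x y) ∧ ∀ᵐ z ∂μ,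
      (if Even (δ x y) then (1 - W x z) * W y z else W x z * (1 - W y z)) =
      if δ x y + 1 ≤ δ x z ∧ Even (δ x z + (δ x y + 1)) then 1 else 0 := by
  filter_upwards [h.par, h.mass, h.ult, h.deg] with x hp hm hu hd
  filter_upwards [hp, h.par, h.mass, hu, h.deg] with y hpy hp' hm' hu' hd'
  have key : ∀ᵐ z ∂μ,
      (if Even (δ x y) then (1 - W x z) * W y z else W x z * (1 - W y z)) =
      if δ x y + 1 ≤ δ x z ∧ Even (δ x z + (δ x y + 1)) then 1 else 0 := by
    filter_upwards [hp, hp', hu'] with z h1 h2 h3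
    rw [h1, h2]
    obtain ⟨u1, u2, u3⟩ := h3
    simp only [Nat.even_iff]
    generalize δ x y = p at *
    generalize δ x z = q at *
    generalize δ y z = r at *
    split_ifs <;> first | norm_num; done | (exfalso; omega)
  refine ⟨?_, key⟩
  have hg := geo (h.meas1 x) hm (δ x y + 1) (θ := 1) (by norm_num) (by norm_num)
  simp only [one_pow] at hg
  rw [← integral_congr_ae key] at hg
  have : FF.rr μ W x y / 3 = (1 / 2) ^ (δ x y + 1) / 2 / (1 - 1 / 4) := by
    rw [← hg]
    split_ifs
    · exact (rr_eq' hW hd').symm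
    · exact (rr_eq hW hd).symm
  rw [pow_succ] at this
  norm_num at this ⊢
  linarith

lemma TS.ksum (hW : Ker W) (h : TS μ W δ) :
    ∀ᵐ x ∂μ, ∀ᵐ y ∂μ,
      ∫ z, (if Even (δ x y) then (1 - W x z) * W y z else W x z * (1 - W y z)) * FF.rr μ W x z ∂μ
        = 2 / 15 * FF.rr μ W x y ^ 2 := by
  filter_upwards [h.rr hW, h.mass] with x hx hm
  filter_upwards [hx] with y hy
  have hg := geo (h.meas1 x) hm (δ x y + 1) (θ := 1 / 2) (by norm_num) (by norm_num)
  have : ∀ᵐ z ∂μ, (if Even (δ x y) then (1 - W x z) * W y z else W x z * (1 - W y z)) * FF.rr μ W x z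
      = if δ x y + 1 ≤ δ x z ∧ Even (δ x z + (δ x y + 1)) then (1 / 2) ^ (δ x z) else 0 := by
    filter_upwards [hx, hy.2] with z h1 h2
    rw [h2, h1.1]
    split_ifs <;> simp
  rw [integral_congr_ae this, hg, hy.1, pow_succ, ← pow_mul, mul_comm _ 2, pow_mul]
  norm_num
  ring

lemma TS.m (hW : Ker W) (h : TS μ W δ) : ∀ᵐ x ∂μ, ∫ z, W x z * FF.rr μ W x z ∂μ = 8 / 15 := by
  filter_upwards [h.rr hW, h.mass, h.par] with x hx hm hp
  have hg := geo (h.meas1 x) hm 0 (θ := 1 / 2) (by norm_num) (by norm_num)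
  have : ∀ᵐ z ∂μ, W x z * FF.rr μ W x z = if 0 ≤ δ x z ∧ Even (δ x z + 0) then (1 / 2) ^ (δ x z) else 0 := by
    filter_upwards [hx, hp] with z h1 h2
    rw [h1.1, h2]
    simp
  rw [integral_congr_ae this, hg]
  norm_num

/-- Kernel values and ultrametric conditions at almost every quadruple. -/
lemma TS.quad (h : TS μ W δ) : ∀ᵐ a ∂μ, ∀ᵐ b ∂μ, ∀ᵐ c ∂μ, ∀ᵐ d ∂μ,
    (W a b = (if Even (δ a b) then 1 else 0) ∧ W a c = (if Even (δ a c) then 1 else 0) ∧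
     W b c = (if Even (δ b c) then 1 else 0) ∧ W a d = (if Even (δ a d) then 1 else 0) ∧
     W b d = (if Even (δ b d) then 1 else 0) ∧ W c d = (if Even (δ c d) then 1 else 0)) ∧
    Ult (δ a b) (δ a c) (δ b c) ∧ Ult (δ a b) (δ a d) (δ b d) ∧ Ult (δ a c) (δ a d) (δ c d) ∧
    Ult (δ b c) (δ b d) (δ c d) := by
  filter_upwards [h.par, h.ult] with a pa ua
  filter_upwards [pa, ua, h.par, h.ult] with b pab uab pb ub
  filter_upwards [pa, pb, h.par, ua, ub, uab] with c pac pbc pc uac ubc uabc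
  filter_upwards [pa, pb, pc, uab, uac, ubc] with d pad pbd pcd uabd uacd ubcd
  exact ⟨⟨pab, pac, pbc, pad, pbd, pcd⟩, uabc, uabd, uacd, ubcd⟩

end tree

lemma Ult.or {p q r : ℕ} (h : Ult p q r) : (p = q ∧ q ≤ r) ∨ (q = r ∧ r ≤ p) ∨ (p = r ∧ p ≤ q) := by
  obtain ⟨h1, h2, h3⟩ := h
  omega

/-! ### Transfer of the conditions -/
section tr
variable {μ : Measure X} [IsProbabilityMeasure μ] {W : X → X → ℝ}
variable {ν : Measure Y} [IsProbabilityMeasure ν] {V : Y → Y → ℝ}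

lemma transferP (hW : Ker W) (hV : Ker V)
    (hG : ∀ G : SimpleGraph (Fin 6), dens G μ W = dens G ν V)
    (α β : ℝ) (hq : ∀ t, 0 ≤ t → t ≤ 1 → 0 ≤ α - β * t)
    {h : (Fin 5 → ℝ) → ℝ} (hh : h ∈ ML (Set.univ : Set (Fin 5)))
    (hpos : ∀ v : Fin 5 → ℝ, (∀ i, 0 ≤ v i ∧ v i ≤ 1) → 0 ≤ h v)
    (h0 : ∀ᵐ a ∂ν, ∀ᵐ b ∂ν, ∀ᵐ c ∂ν, ∀ᵐ d ∂ν, (α - β * V a b) * h (vec V a b c d) = 0) :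
    ∀ᵐ a ∂μ, ∀ᵐ b ∂μ, ∀ᵐ c ∂μ, ∀ᵐ d ∂μ, (α - β * W a b) * h (vec W a b c d) = 0 := by
  have := transfer hW hV hG α β hq hh (by
    filter_upwards [h0] with a ha
    filter_upwards [ha] with b hb
    by_cases hz : α - β * V a b = 0
    · exact Or.inl hz
    · right
      apply integral_eq_zero_of_ae
      filter_upwards [hb] with c hc
      apply integral_eq_zero_of_ae
      filter_upwards [hc] with d hd
      exact (mul_eq_zero.1 hd).resolve_left hz)
  have hp : ∀ a b c d, 0 ≤ h (vec W a b c d) := by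
    intro a b c d
    apply hpos
    intro i
    fin_cases i <;> exact ⟨hW.nonneg _ _, hW.le_one _ _⟩
  filter_upwards [this] with a ha
  filter_upwards [ha] with b hb
  rcases hb with hb | hb
  · simp [hb]
  · have B : BM (fun p : X × X => h (vec W a b p.1 p.2)) :=
      (BM_vec hW hh).comp (g := fun p : X × X => (((a, b), p.1), p.2)) (by fun_prop)
    have := (B.int μ).ae_zero (fun c => integral_nonneg fun d => hp a b c d) hb
    filter_upwards [this] with c hc
    have := (B.comp (g := fun d : X => (c, d)) (by fun_prop)).ae_zero (fun d => hp a b c d) hc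
    filter_upwards [this] with d hd
    rw [hd, mul_zero]

/-- A variable or its complement. -/
def lit (s : Bool) (t : ℝ) : ℝ := if s then t else 1 - t

lemma ML_lit (s : Fin 5 → Bool) :
    (fun v : Fin 5 → ℝ => ∏ i, lit (s i) (v i)) ∈ ML (Set.univ : Set (Fin 5)) := by
  have : ∀ T : Finset (Fin 5), (fun v : Fin 5 → ℝ => ∏ i ∈ T, lit (s i) (v i)) ∈ ML (T : Set (Fin 5)) := by
    intro T
    induction T using Finset.induction_on with
    | empty => simpa using ML_const _ 1
    | insert a T ha ih =>
      simp only [Finset.prod_insert ha, Finset.coe_insert, Set.insert_eq]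
      refine ML_mul (by simpa using ha) ?_ ih
      unfold lit
      cases s a
      · exact ML_sub (ML_const _ 1) (ML_var a)
      · exact ML_var a
  exact ML_mono (Set.subset_univ _) (this Finset.univ)

lemma lit_nonneg (s : Fin 5 → Bool) (v : Fin 5 → ℝ) (hv : ∀ i, 0 ≤ v i ∧ v i ≤ 1) :
    0 ≤ ∏ i, lit (s i) (v i) := by
  refine Finset.prod_nonneg fun i _ => ?_
  unfold lit
  split_ifs
  · exact (hv i).1
  · linarith [(hv i).2]

def hdeg : (Fin 5 → ℝ) → ℝ := fun v => v 0 - 2 / 3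
def hm : (Fin 5 → ℝ) → ℝ := fun v => v 0 * (2 - 3 * (v 2 * v 4)) - 8 / 15
def hk1 : (Fin 5 → ℝ) → ℝ := fun v => ((1 - v 0) * v 1) * (2 - 3 * (v 2 * v 4)) -
  2 / 15 * ((2 - 3 * (v 0 * v 1)) * (2 - 3 * (v 2 * v 3)))
def hk0 : (Fin 5 → ℝ) → ℝ := fun v => (v 0 * (1 - v 1)) * (2 - 3 * (v 2 * v 4)) -
  2 / 15 * ((2 - 3 * (v 0 * v 1)) * (2 - 3 * (v 2 * v 3)))

lemma ML_two {i j : Fin 5} (h : i ≠ j) :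
    (fun v : Fin 5 → ℝ => 2 - 3 * (v i * v j)) ∈ ML ({i, j} : Set (Fin 5)) :=
  ML_sub (ML_const _ 2) (ML_smul 3 (by
    rw [Set.insert_eq]; exact ML_mul (Set.disjoint_singleton.2 h) (ML_var i) (ML_var j)))

lemma ML_hdeg : hdeg ∈ ML (Set.univ : Set (Fin 5)) :=
  ML_sub (ML_mono (Set.subset_univ _) (ML_var 0)) (ML_const _ _)

lemma ML_hm : hm ∈ ML (Set.univ : Set (Fin 5)) :=
  ML_sub (ML_mono (Set.subset_univ _) (ML_mul (by simp) (ML_var 0) (ML_two (by decide))))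
    (ML_const _ _)

lemma ML_01 : (fun v : Fin 5 → ℝ => (2 - 3 * (v 0 * v 1)) * (2 - 3 * (v 2 * v 3))) ∈
    ML (Set.univ : Set (Fin 5)) :=
  ML_mono (Set.subset_univ _) (ML_mul (by simp) (ML_two (by decide)) (ML_two (by decide)))

lemma ML_hk1 : hk1 ∈ ML (Set.univ : Set (Fin 5)) := by
  refine ML_sub (ML_mono (Set.subset_univ _) (ML_mul (S := {0} ∪ {1}) (T := {2, 4}) (by simp) ?_ (ML_two (by decide))))
    (ML_smul _ ML_01)
  exact ML_mul (by simp) (ML_sub (ML_const _ 1) (ML_var 0)) (ML_var 1)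

lemma ML_hk0 : hk0 ∈ ML (Set.univ : Set (Fin 5)) := by
  refine ML_sub (ML_mono (Set.subset_univ _) (ML_mul (S := {0} ∪ {1}) (T := {2, 4}) (by simp) ?_ (ML_two (by decide))))
    (ML_smul _ ML_01)
  exact ML_mul (by simp) (ML_var 0) (ML_sub (ML_const _ 1) (ML_var 1))

lemma int_two (hW : Ker W) (k : ℝ) (a c : X) :
    ∫ d, k * (2 - 3 * (W a d * W c d)) ∂μ = k * rr μ W a c := by
  rw [integral_const_mul, integral_sub (bint (BM.const 2))
    (bint ((BM.const 3).mul ((hW.bm1 a).mul (hW.bm1 c)))), integral_const_mul, rr]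
  simp

lemma bm_two (hW : Ker W) (k : ℝ) (a c : X) : BM (fun d => k * (2 - 3 * (W a d * W c d))) :=
  (BM.const k).mul ((BM.const 2).sub ((BM.const 3).mul ((hW.bm1 a).mul (hW.bm1 c))))

lemma int_hdeg (hW : Ker W) (a b : X) :
    ∫ c, ∫ d, hdeg (vec W a b c d) ∂μ ∂μ = ∫ c, W a c ∂μ - 2 / 3 := by
  have : ∀ c d, hdeg (vec W a b c d) = W a c - 2 / 3 := fun c d => rfl
  simp only [this, integral_const, probReal_univ, one_smul]
  rw [integral_sub (bint (hW.bm1 a)) (bint (BM.const _))]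
  simp

lemma int_hm (hW : Ker W) (a b : X) :
    ∫ c, ∫ d, hm (vec W a b c d) ∂μ ∂μ = ∫ c, W a c * rr μ W a c ∂μ - 8 / 15 := by
  have : ∀ c d, hm (vec W a b c d) = W a c * (2 - 3 * (W a d * W c d)) - 8 / 15 := fun c d => rfl
  have : ∀ c, ∫ d, hm (vec W a b c d) ∂μ = W a c * rr μ W a c - 8 / 15 := by
    intro c
    simp only [this]
    rw [integral_sub (bint (bm_two hW _ _ _)) (bint (BM.const _)), int_two hW]
    simp
  simp only [this]
  rw [integral_sub (bint ((hW.bm1 a).mul (BM_rr hW a))) (bint (BM.const _))]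
  simp

lemma int_hk (hW : Ker W) (a b : X) {g : X → ℝ} (hg : BM g) :
    ∫ c, ∫ d, (g c * (2 - 3 * (W a d * W c d)) -
      2 / 15 * ((2 - 3 * (W a c * W b c)) * (2 - 3 * (W a d * W b d)))) ∂μ ∂μ =
    ∫ c, g c * rr μ W a c ∂μ - 2 / 15 * rr μ W a b ^ 2 := by
  have : ∀ c, ∫ d, (g c * (2 - 3 * (W a d * W c d)) -
      2 / 15 * ((2 - 3 * (W a c * W b c)) * (2 - 3 * (W a d * W b d)))) ∂μ =
      g c * rr μ W a c - (2 / 15 * rr μ W a b) * (2 - 3 * (W a c * W b c)) := by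
    intro c
    rw [integral_sub (bint (bm_two hW _ _ _)) (bint ((BM.const _).mul (bm_two hW _ _ _))),
      int_two hW, integral_const_mul, int_two hW]
    ring
  simp only [this]
  rw [integral_sub (bint (hg.mul (BM_rr hW a))) (bint (bm_two hW _ _ _)), int_two hW]
  ring

/-- All conditions transfer from the tree kernel to a kernel with the same 6-vertex densities. -/
lemma transferAx (hW : Ker W) (hV : Ker V)
    (hG : ∀ G : SimpleGraph (Fin 6), dens G μ W = dens G ν V)
    {δ : Y → Y → ℕ} (hT : TS ν V δ) : Ax μ W := by
  have q0 : ∀ t : ℝ, 0 ≤ t → t ≤ 1 → 0 ≤ (1 : ℝ) - 0 * t := fun t _ _ => by norm_num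
  have q1 : ∀ t : ℝ, 0 ≤ t → t ≤ 1 → 0 ≤ (0 : ℝ) - (-1) * t := fun t h _ => by linarith
  have q2 : ∀ t : ℝ, 0 ≤ t → t ≤ 1 → 0 ≤ (1 : ℝ) - 1 * t := fun t _ h => by linarith
  have nonempty_ae : ∀ {p : Prop}, (∀ᵐ _ ∂μ, p) → p := fun h => h.exists.choose_spec
  constructor
  · have := transfer hW hV hG 1 0 q0 ML_hdeg (by
      filter_upwards [hT.deg] with a ha
      refine Filter.Eventually.of_forall fun b => Or.inr ?_
      rw [int_hdeg hV, ha]; norm_num)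
    filter_upwards [this] with a ha
    simp only [int_hdeg hW] at ha
    apply nonempty_ae
    filter_upwards [ha] with b hb
    rcases hb with hb | hb
    · norm_num at hb
    · linarith
  · have := transferP hW hV hG 0 (-1) q1 (ML_lit ![false, true, false, false, true])
      (lit_nonneg _) (by
        filter_upwards [hT.quad] with a ha
        filter_upwards [ha] with b hb
        filter_upwards [hb] with c hc
        filter_upwards [hc] with d hd
        obtain ⟨⟨h1, h2, h3, h4, h5, h6⟩, u1, u2, u3, u4⟩ := hd
        have u1 := u1.or; have u2 := u2.or; have u3 := u3.or; have u4 := u4.or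
        simp only [Fin.prod_univ_five, lit, vec]
        simp only [Matrix.cons_val, h1, h2, h3, h4, h5, h6, Nat.even_iff]
        generalize δ a b = e1 at *
        generalize δ a c = e2 at *
        generalize δ b c = e3 at *
        generalize δ a d = e4 at *
        generalize δ b d = e5 at *
        generalize δ c d = e6 at *
        clear h1 h2 h3 h4 h5 h6
        split_ifs <;> first | (norm_num; done) | (exfalso; omega) | (simp at *; done))
    filter_upwards [this] with a ha
    filter_upwards [ha] with b hb
    filter_upwards [hb] with c hc
    filter_upwards [hc] with d hd
    simpa [Fin.prod_univ_five, lit, vec] using hd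
  · have := transferP hW hV hG 1 1 q2 (ML_lit ![true, false, true, true, false])
      (lit_nonneg _) (by
        filter_upwards [hT.quad] with a ha
        filter_upwards [ha] with b hb
        filter_upwards [hb] with c hc
        filter_upwards [hc] with d hd
        obtain ⟨⟨h1, h2, h3, h4, h5, h6⟩, u1, u2, u3, u4⟩ := hd
        have u1 := u1.or; have u2 := u2.or; have u3 := u3.or; have u4 := u4.or
        simp only [Fin.prod_univ_five, lit, vec]
        simp only [Matrix.cons_val, h1, h2, h3, h4, h5, h6, Nat.even_iff]
        generalize δ a b = e1 at *
        generalize δ a c = e2 at *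
        generalize δ b c = e3 at *
        generalize δ a d = e4 at *
        generalize δ b d = e5 at *
        generalize δ c d = e6 at *
        clear h1 h2 h3 h4 h5 h6
        split_ifs <;> first | (norm_num; done) | (exfalso; omega) | (simp at *; done))
    filter_upwards [this] with a ha
    filter_upwards [ha] with b hb
    filter_upwards [hb] with c hc
    filter_upwards [hc] with d hd
    simpa [Fin.prod_univ_five, lit, vec] using hd
  · have := transferP hW hV hG 1 1 q2 (ML_lit ![true, false, false, true, true])
      (lit_nonneg _) (by
        filter_upwards [hT.quad] with a ha
        filter_upwards [ha] with b hb
        filter_upwards [hb] with c hc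
        filter_upwards [hc] with d hd
        obtain ⟨⟨h1, h2, h3, h4, h5, h6⟩, u1, u2, u3, u4⟩ := hd
        have u1 := u1.or; have u2 := u2.or; have u3 := u3.or; have u4 := u4.or
        simp only [Fin.prod_univ_five, lit, vec]
        simp only [Matrix.cons_val, h1, h2, h3, h4, h5, h6, Nat.even_iff]
        generalize δ a b = e1 at *
        generalize δ a c = e2 at *
        generalize δ b c = e3 at *
        generalize δ a d = e4 at *
        generalize δ b d = e5 at *
        generalize δ c d = e6 at *
        clear h1 h2 h3 h4 h5 h6
        split_ifs <;> first | (norm_num; done) | (exfalso; omega) | (simp at *; done))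
    filter_upwards [this] with a ha
    filter_upwards [ha] with b hb
    filter_upwards [hb] with c hc
    filter_upwards [hc] with d hd
    simpa [Fin.prod_univ_five, lit, vec] using hd
  · have := transferP hW hV hG 0 (-1) q1 (ML_lit ![true, false, false, true, false])
      (lit_nonneg _) (by
        filter_upwards [hT.quad] with a ha
        filter_upwards [ha] with b hb
        filter_upwards [hb] with c hc
        filter_upwards [hc] with d hd
        obtain ⟨⟨h1, h2, h3, h4, h5, h6⟩, u1, u2, u3, u4⟩ := hd
        have u1 := u1.or; have u2 := u2.or; have u3 := u3.or; have u4 := u4.or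
        simp only [Fin.prod_univ_five, lit, vec]
        simp only [Matrix.cons_val, h1, h2, h3, h4, h5, h6, Nat.even_iff]
        generalize δ a b = e1 at *
        generalize δ a c = e2 at *
        generalize δ b c = e3 at *
        generalize δ a d = e4 at *
        generalize δ b d = e5 at *
        generalize δ c d = e6 at *
        clear h1 h2 h3 h4 h5 h6
        split_ifs <;> first | (norm_num; done) | (exfalso; omega) | (simp at *; done))
    filter_upwards [this] with a ha
    filter_upwards [ha] with b hb
    filter_upwards [hb] with c hc
    filter_upwards [hc] with d hd
    simpa [Fin.prod_univ_five, lit, vec] using hd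
  · have E : ∀ {Z : Type} [MeasurableSpace Z] (U : Z → Z → ℝ) (a b c d : Z),
      hk1 (vec U a b c d) = ((1 - U a c) * U b c) * (2 - 3 * (U a d * U c d)) -
        2 / 15 * ((2 - 3 * (U a c * U b c)) * (2 - 3 * (U a d * U b d))) := fun U a b c d => rfl
    have := transfer hW hV hG 0 (-1) q1 ML_hk1 (by
      filter_upwards [hT.ksum hV, hT.par] with a ha hp
      filter_upwards [ha, hp] with b hb hp'
      by_cases he : Even (δ a b)
      · right
        simp only [E]
        rw [int_hk hV a b (((BM.const 1).sub (hV.bm1 a)).mul (hV.bm1 b)), sub_eq_zero]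
        simpa only [if_pos he] using hb
      · left; rw [hp', if_neg he]; norm_num)
    filter_upwards [this] with a ha
    filter_upwards [ha] with b hb
    simp only [E] at hb
    rw [int_hk hW a b (((BM.const 1).sub (hW.bm1 a)).mul (hW.bm1 b))] at hb
    rcases hb with hb | hb
    · left; linarith
    · right; exact sub_eq_zero.1 hb
  · have E : ∀ {Z : Type} [MeasurableSpace Z] (U : Z → Z → ℝ) (a b c d : Z),
      hk0 (vec U a b c d) = (U a c * (1 - U b c)) * (2 - 3 * (U a d * U c d)) -
        2 / 15 * ((2 - 3 * (U a c * U b c)) * (2 - 3 * (U a d * U b d))) := fun U a b c d => rfl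
    have := transfer hW hV hG 1 1 q2 ML_hk0 (by
      filter_upwards [hT.ksum hV, hT.par] with a ha hp
      filter_upwards [ha, hp] with b hb hp'
      by_cases he : Even (δ a b)
      · left; rw [hp', if_pos he]; norm_num
      · right
        simp only [E]
        rw [int_hk hV a b ((hV.bm1 a).mul ((BM.const 1).sub (hV.bm1 b))), sub_eq_zero]
        simpa only [if_neg he] using hb)
    filter_upwards [this] with a ha
    filter_upwards [ha] with b hb
    simp only [E] at hb
    rw [int_hk hW a b ((hW.bm1 a).mul ((BM.const 1).sub (hW.bm1 b)))] at hb
    rcases hb with hb | hb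
    · left; linarith
    · right; exact sub_eq_zero.1 hb
  · have := transfer hW hV hG 1 0 q0 ML_hm (by
      filter_upwards [hT.m hV] with a ha
      refine Filter.Eventually.of_forall fun b => Or.inr ?_
      rw [int_hm hV, ha]; norm_num)
    filter_upwards [this] with a ha
    simp only [int_hm hW] at ha
    apply nonempty_ae
    filter_upwards [ha] with b hb
    rcases hb with hb | hb
    · norm_num at hb
    · linarith

end tr
end FF

namespace FF
variable {X Y : Type} [MeasurableSpace X] [MeasurableSpace Y]

/-! ### The local structure around one point -/
section loc
variable {μ : Measure X} [IsProbabilityMeasure μ] {ρ : X → ℝ}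

lemma comp_bound {f : X → ℝ} (hf : BM f) {S A : Set X} (hS : MeasurableSet S) (hA : MeasurableSet A)
    (hSA : ∀ᵐ z ∂μ, z ∈ S → z ∈ A) (c : ℝ) (hc : ∀ᵐ z ∂μ, z ∈ A → z ∉ S → f z ≤ c) :
    ∫ z in A, f z ∂μ - ∫ z in S, f z ∂μ ≤ c * (μ.real A - μ.real S) := by
  have hb : BM (fun z => c - f z) := (BM.const c).sub hf
  have h1 : ∫ z in S, (c - f z) ∂μ ≤ ∫ z in A, (c - f z) ∂μ := by
    rw [← integral_indicator hS, ← integral_indicator hA]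
    refine integral_mono_ae ((bint hb).indicator hS) ((bint hb).indicator hA) ?_
    filter_upwards [hSA, hc] with z h1 h2
    simp only [Set.indicator]
    split_ifs with a b b
    · exact le_rfl
    · exact absurd (h1 a) b
    · linarith [h2 b a]
    · exact le_rfl
  have h2 : ∀ T : Set X, ∫ z in T, (c - f z) ∂μ = c * μ.real T - ∫ z in T, f z ∂μ := by
    intro T
    rw [integral_sub (bint (BM.const c)).restrict (bint hf).restrict]
    simp [mul_comm]
  rw [h2, h2] at h1
  linarith

/-- `S` is the set of vertices of the class `Q` below `y`. -/
structure Sx (μ : Measure X) (ρ : X → ℝ) (y : X) (Q S : Set X) : Prop where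
  meas : MeasurableSet S
  sub : S ⊆ Q
  mass : μ.real S = ρ y / 3
  int : ∫ z in S, ρ z ∂μ = 2 / 15 * ρ y ^ 2
  le : ∀ᵐ z ∂μ, z ∈ S → ρ z ≤ ρ y
  ge : ∀ᵐ z ∂μ, z ∈ Q → z ∉ S → ρ y ≤ ρ z

structure Loc (μ : Measure X) (ρ : X → ℝ) (P : Set X) : Prop where
  bm : BM ρ
  meas : MeasurableSet P
  hp : ∀ᵐ y ∂μ, y ∈ P → ∃ S, Sx μ ρ y Pᶜ S
  hq : ∀ᵐ y ∂μ, y ∈ Pᶜ → ∃ S, Sx μ ρ y P S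

lemma Loc.flip {P : Set X} (h : Loc μ ρ P) : Loc μ ρ Pᶜ :=
  ⟨h.bm, h.meas.compl, by simpa only [compl_compl] using h.hq, by simpa only [compl_compl] using h.hp⟩

structure Lv (μ : Measure X) (ρ : X → ℝ) (u : ℝ) (P : Set X) : Prop where
  m1 : μ.real (P ∩ {z | ρ z ≤ u}) = 2 / 3 * u
  m2 : μ.real (Pᶜ ∩ {z | ρ z ≤ u}) = 1 / 3 * u
  i1 : ∫ z in P ∩ {z | ρ z ≤ u}, ρ z ∂μ = 8 / 15 * u ^ 2
  i2 : ∫ z in Pᶜ ∩ {z | ρ z ≤ u}, ρ z ∂μ = 2 / 15 * u ^ 2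

lemma Lv.step {P : Set X} (h : Loc μ ρ P) {u : ℝ} (hu : 0 < u) (hL : Lv μ ρ u P) :
    Lv μ ρ (u / 2) Pᶜ ∧ ∀ᵐ y ∂μ, ρ y ≤ u → (y ∈ P ∧ ρ y = u) ∨ ρ y ≤ u / 2 := by
  have hm : ∀ v, MeasurableSet {z | ρ z ≤ v} := fun v => measurableSet_le h.bm.1 measurable_const
  have hA := h.meas.inter (hm u)
  have hB := h.meas.compl.inter (hm u)
  have s1 : ∀ᵐ z ∂μ, z ∈ Pᶜ → ρ z ≤ u → ρ z ≤ u / 2 := by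
    filter_upwards [h.hq] with z hz hzP hzu
    obtain ⟨S, hS⟩ := hz hzP
    have := comp_bound h.bm hS.meas hA (by
      filter_upwards [hS.le] with w hw hwS
      exact ⟨hS.sub hwS, (hw hwS).trans hzu⟩) u (by
      filter_upwards with w hw _
      exact hw.2)
    rw [hL.m1, hL.i1, hS.mass, hS.int] at this
    have h3 : 0 < 2 * u - ρ z := by linarith
    by_contra hc
    push Not at hc
    nlinarith [mul_pos h3 (sub_pos.2 hc)]
  have s2 : ∀ᵐ y ∂μ, y ∈ P → ρ y < u → ρ y ≤ u / 4 := by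
    filter_upwards [h.hp] with y hy hyP hyu
    obtain ⟨S, hS⟩ := hy hyP
    have := comp_bound h.bm hS.meas hB (by
      filter_upwards [hS.le] with w hw hwS
      exact ⟨hS.sub hwS, (hw hwS).trans hyu.le⟩) (u / 2) (by
      filter_upwards [s1] with w hw hw1 _
      exact hw hw1.1 hw1.2)
    rw [hL.m2, hL.i2, hS.mass, hS.int] at this
    by_contra hc
    push Not at hc
    nlinarith [mul_pos (sub_pos.2 hyu) (sub_pos.2 hc)]
  obtain ⟨z, hzB, hz4, hz2, S, hS⟩ : ∃ z, z ∈ Pᶜ ∧ u / 4 < ρ z ∧ ρ z ≤ u / 2 ∧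
      ∃ S, Sx μ ρ z P S := by
    by_contra hcon
    have : ∀ᵐ z ∂μ, z ∈ Pᶜ ∩ {z | ρ z ≤ u} → ρ z ≤ u / 4 := by
      filter_upwards [s1, h.hq] with z h1 h2 h3
      by_contra h4
      push Not at h4
      exact hcon ⟨z, h3.1, h4, h1 h3.1 h3.2, h2 h3.1⟩
    have := comp_bound h.bm MeasurableSet.empty hB (by simp) (u / 4) (by
      filter_upwards [this] with z h1 h2 _ using h1 h2)
    rw [hL.m2, hL.i2] at this
    simp at this
    nlinarith [mul_pos hu hu]
  have hs : ρ z = u / 2 := by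
    have := comp_bound h.bm.neg hS.meas hA (by
      filter_upwards [hS.le] with w hw hwS
      exact ⟨hS.sub hwS, by have := hw hwS; show ρ w ≤ u; linarith⟩) (-u) (by
      filter_upwards [s2, hS.ge] with w h1 h2 h3 h4
      have := h2 h3.1 h4
      have h5 : ρ w ≤ u := h3.2
      rcases h5.lt_or_eq with h6 | h6
      · linarith [h1 h3.1 h6]
      · linarith)
    rw [integral_neg, integral_neg, hL.m1, hL.i1, hS.mass, hS.int] at this
    have h3 : 0 < 2 * u - ρ z := by linarith
    by_contra hc
    have hc : 0 < u / 2 - ρ z := by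
      rcases hz2.lt_or_eq with h6 | h6
      · linarith
      · exact absurd h6 hc
    nlinarith [mul_pos h3 hc]
  have e1 : (P ∩ {z | ρ z ≤ u / 2} : Set X) =ᵐ[μ] S := by
    filter_upwards [hS.le, hS.ge, s2] with w h1 h2 h3
    apply propext
    constructor
    · intro h4
      by_contra h5
      have h6 : ρ w ≤ u / 2 := h4.2
      linarith [h3 h4.1 (by linarith), h2 h4.1 h5]
    · intro h4
      exact ⟨hS.sub h4, by rw [← hs]; exact h1 h4⟩
  have e2 : (Pᶜ ∩ {z | ρ z ≤ u / 2} : Set X) =ᵐ[μ] (Pᶜ ∩ {z | ρ z ≤ u} : Set X) := by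
    filter_upwards [s1] with w h1
    apply propext
    constructor
    · intro h4
      have h6 : ρ w ≤ u / 2 := h4.2
      exact ⟨h4.1, by show ρ w ≤ u; linarith⟩
    · intro h4
      exact ⟨h4.1, h1 h4.1 h4.2⟩
  constructor
  · constructor
    · rw [measureReal_congr e2, hL.m2]; ring
    · rw [compl_compl, measureReal_congr e1, hS.mass, hs]; ring
    · rw [setIntegral_congr_set e2, hL.i2]; ring
    · rw [compl_compl, setIntegral_congr_set e1, hS.int, hs]
  · filter_upwards [s1, s2] with y h1 h2 h3
    by_cases hy : y ∈ P
    · rcases h3.lt_or_eq with h6 | h6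
      · right; linarith [h2 hy h6]
      · exact Or.inl ⟨hy, h6⟩
    · exact Or.inr (h1 hy h3)

lemma Loc.main {N : Set X} (h : Loc μ ρ N) (hL : Lv μ ρ 1 N) (h1 : ∀ᵐ y ∂μ, ρ y ≤ 1) :
    (∀ d : ℕ, μ.real {y | ρ y ≤ (1 / 2) ^ d} = (1 / 2) ^ d) ∧
    ∀ᵐ y ∂μ, ∃ d : ℕ, ρ y = (1 / 2) ^ d ∧ (y ∈ N ↔ Even d) := by
  let PP : ℕ → Set X := fun d => if Even d then N else Nᶜ
  have hloc : ∀ d, Loc μ ρ (PP d) := by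
    intro d
    by_cases hd : Even d
    · simp only [PP, if_pos hd]; exact h
    · simp only [PP, if_neg hd]; exact h.flip
  have hPP : ∀ d, PP (d + 1) = (PP d)ᶜ := by
    intro d
    simp only [PP, Nat.even_add_one]
    by_cases hd : Even d <;> simp [hd]
  have hLv : ∀ d : ℕ, Lv μ ρ ((1 / 2) ^ d) (PP d) := by
    intro d
    induction d with
    | zero => simpa [PP] using hL
    | succ d ih =>
      rw [hPP, pow_succ, ← div_eq_mul_one_div]
      exact (Lv.step (hloc d) (by positivity) ih).1
  have hmass : ∀ d : ℕ, μ.real {y | ρ y ≤ (1 / 2) ^ d} = (1 / 2) ^ d := by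
    intro d
    have a := (hLv d).m1
    have b := (hLv d).m2
    rw [Set.inter_comm] at a b
    rw [← measureReal_inter_add_sdiff (s := {y | ρ y ≤ (1 / 2) ^ d}) (hloc d).meas, a, Set.sdiff_eq, b]
    ring
  refine ⟨hmass, ?_⟩
  have hst : ∀ᵐ y ∂μ, ∀ d : ℕ, ρ y ≤ (1 / 2) ^ d →
      (y ∈ PP d ∧ ρ y = (1 / 2) ^ d) ∨ ρ y ≤ (1 / 2) ^ (d + 1) := by
    rw [ae_all_iff]
    intro d
    rw [pow_succ, ← div_eq_mul_one_div]
    exact (Lv.step (hloc d) (by positivity) (hLv d)).2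
  have hz : ∀ᵐ y ∂μ, ¬ ∀ d : ℕ, ρ y ≤ (1 / 2) ^ d := by
    have : μ.real {y | ∀ d : ℕ, ρ y ≤ (1 / 2) ^ d} = 0 := by
      refine le_antisymm ?_ measureReal_nonneg
      refine ge_of_tendsto' (tendsto_pow_atTop_nhds_zero_of_lt_one (r := (1 / 2 : ℝ)) (by norm_num) (by norm_num)) fun d => ?_
      rw [← hmass d]
      exact measureReal_mono fun y hy => hy d
    rw [measureReal_eq_zero_iff] at this
    rw [ae_iff]
    simpa only [not_not] using this
  filter_upwards [hst, hz, h1] with y h2 h3 h4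
  by_contra hcon
  apply h3
  intro d
  induction d with
  | zero => simpa using h4
  | succ d ih =>
    refine (h2 d ih).resolve_left fun hh => hcon ⟨d, hh.2, ?_⟩
    have := hh.1
    by_cases hd : Even d
    · simpa [PP, hd] using this
    · simpa [PP, hd] using this

end loc
end FF

namespace FF
variable {X Y : Type} [MeasurableSpace X] [MeasurableSpace Y]
section axts
variable {μ : Measure X} [IsProbabilityMeasure μ] {W : X → X → ℝ}

lemma bmi (hW : Ker W) (x : X) : BM (fun z => 1 - W x z) := (BM.const 1).sub (hW.bm1 x)

lemma rr_nonneg (hW : Ker W) {x y : X} (hx : ∫ z, W x z ∂μ = 2 / 3) : 0 ≤ rr μ W x y := by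
  have : 0 ≤ ∫ z, W x z * (1 - W y z) ∂μ := integral_nonneg fun z =>
    mul_nonneg (hW.nonneg _ _) (by simpa using hW.le_one y z)
  rw [rr_eq hW hx] at this
  linarith

lemma rr_le_one (hW : Ker W) {x y : X} (hx : ∫ z, W x z ∂μ = 2 / 3) (hy : ∫ z, W y z ∂μ = 2 / 3) :
    rr μ W x y ≤ 1 := by
  have h0 : 0 ≤ ∫ z, (1 - W x z) * (1 - W y z) ∂μ := integral_nonneg fun z =>
    mul_nonneg (by simpa using hW.le_one x z) (by simpa using hW.le_one y z)
  have : ∀ z, (1 - W x z) * (1 - W y z) = (1 - W x z) - (1 - W x z) * W y z := fun z => by ring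
  simp only [this] at h0
  rw [integral_sub (bint (bmi hW x)) (bint ((bmi hW x).mul (hW.bm1 y))), rr_eq' hW hy,
    integral_sub (bint (BM.const 1)) (bint (hW.bm1 x)), hx] at h0
  simp at h0
  linarith

lemma rr_tri (hW : Ker W) {x y z : X} (hx : ∫ z, W x z ∂μ = 2 / 3) (hy : ∫ z, W y z ∂μ = 2 / 3) :
    rr μ W x z ≤ rr μ W x y + rr μ W y z := by
  have : ∫ t, W x t * (1 - W z t) ∂μ ≤ ∫ t, (W x t * (1 - W y t) + W y t * (1 - W z t)) ∂μ := by
    refine integral_mono (bint ((hW.bm1 x).mul (bmi hW z)))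
      (bint (((hW.bm1 x).mul (bmi hW y)).add ((hW.bm1 y).mul (bmi hW z)))) fun t => ?_
    simp only
    have a1 := hW.nonneg x t
    have a2 := hW.nonneg y t
    have a3 := hW.nonneg z t
    have b1 := hW.le_one x t
    have b2 := hW.le_one y t
    have b3 := hW.le_one z t
    nlinarith [mul_nonneg (mul_nonneg a1 (sub_nonneg.2 b2)) a3,
      mul_nonneg (mul_nonneg (sub_nonneg.2 b1) a2) (sub_nonneg.2 b3)]
  rw [integral_add (bint ((hW.bm1 x).mul (bmi hW y))) (bint ((hW.bm1 y).mul (bmi hW z))),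
    rr_eq hW hx, rr_eq hW hx, rr_eq hW hy] at this
  linarith

lemma ax01 (hW : Ker W) (hA : Ax μ W) : ∀ᵐ x ∂μ, ∀ᵐ y ∂μ, W x y = 0 ∨ W x y = 1 := by
  have step : ∀ᵐ x ∂μ, ∀ᵐ y ∂μ, rr μ W x y ≠ 0 → W x y = 0 ∨ W x y = 1 := by
    filter_upwards [hA.p3, hA.p4, hA.deg] with a h3 h4 hda
    filter_upwards [h3, h4, hA.deg] with b h3 h4 hdb
    intro hr
    by_contra hcon
    push Not at hcon
    apply hr
    have h1 : ∀ᵐ c ∂μ, (W a c * (1 - W b c)) * (rr μ W a b / 3) = 0 := by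
      filter_upwards [h3, h4] with c h3 h4
      rw [← rr_eq' hW hdb, ← integral_const_mul]
      apply integral_eq_zero_of_ae
      filter_upwards [h3, h4] with d h3 h4
      have e3 := (mul_eq_zero.1 h3).resolve_left (sub_ne_zero.2 hcon.2.symm)
      have e4 := (mul_eq_zero.1 h4).resolve_left hcon.1
      simp only [Pi.zero_apply]
      linear_combination e3 + e4
    have h2 : ∫ c, (W a c * (1 - W b c)) * (rr μ W a b / 3) ∂μ = 0 := integral_eq_zero_of_ae h1
    rw [integral_mul_const, rr_eq hW hda] at h2
    nlinarith
  filter_upwards [step, hA.deg] with x h1 hx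
  by_cases h2 : ∀ᵐ y ∂μ, rr μ W x y ≠ 0
  · filter_upwards [h1, h2] with y h1 h2 using h1 h2
  · have h3 : ∃ᶠ y in ae μ, rr μ W x y = 0 := by
      rw [Filter.Frequently]; exact h2
    obtain ⟨y, hy0, hy⟩ := (h3.and_eventually hA.deg).exists
    have e1 := ((hW.bm1 x).mul (bmi hW y)).ae_zero (μ := μ) (fun z =>
      mul_nonneg (hW.nonneg _ _) (by simpa using hW.le_one y z)) (by rw [rr_eq hW hx, hy0]; simp)
    have e2 := ((bmi hW x).mul (hW.bm1 y)).ae_zero (μ := μ) (fun z =>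
      mul_nonneg (by simpa using hW.le_one x z) (hW.nonneg _ _)) (by rw [rr_eq' hW hy, hy0]; simp)
    filter_upwards [e1, e2] with z e1 e2
    have : W x z * (W x z - 1) = 0 := by
      have : W x z = W y z := by linarith
      rw [← this] at e1; linarith
    rcases mul_eq_zero.1 this with h | h
    · exact Or.inl h
    · right; linarith

/-- The order property. -/
def TT (μ : Measure X) (W : X → X → ℝ) (x y z : X) : Prop :=
  (W x y = 1 → W x z = 0 → W y z = 1 → rr μ W x z ≤ rr μ W x y) ∧
  (W x y = 0 → W x z = 1 → W y z = 0 → rr μ W x z ≤ rr μ W x y)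

lemma axT (hW : Ker W) (hA : Ax μ W) : ∀ᵐ x ∂μ, ∀ᵐ y ∂μ, ∀ᵐ z ∂μ, TT μ W x y z := by
  filter_upwards [hA.p1, hA.p2, hA.deg] with a h1 h2 ha
  filter_upwards [h1, h2, hA.deg] with b h1 h2 hb
  filter_upwards [h1, h2, hA.deg] with c h1 h2 hc
  constructor
  · intro e1 e2 e3
    have : ∫ d, (1 - W a d) * W c d ∂μ ≤ ∫ d, (1 - W a d) * W b d ∂μ := by
      refine integral_mono_ae (bint ((bmi hW a).mul (hW.bm1 c))) (bint ((bmi hW a).mul (hW.bm1 b))) ?_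
      filter_upwards [h1] with d h
      rw [e1, e2, e3] at h
      have a1 := hW.nonneg b d
      have a2 := hW.le_one a d
      have a3 := hW.le_one c d
      have h' : (1 - W a d) * W c d = (1 - W a d) * W b d * W c d := by linarith
      rw [h']
      exact mul_le_of_le_one_right (mul_nonneg (by linarith) a1) a3
    rw [rr_eq' hW hc, rr_eq' hW hb] at this
    linarith
  · intro e1 e2 e3
    have : ∫ d, W a d * (1 - W c d) ∂μ ≤ ∫ d, W a d * (1 - W b d) ∂μ := by
      refine integral_mono_ae (bint ((hW.bm1 a).mul (bmi hW c))) (bint ((hW.bm1 a).mul (bmi hW b))) ?_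
      filter_upwards [h2] with d h
      rw [e1, e2, e3] at h
      have a1 := hW.nonneg a d
      have a2 := hW.le_one b d
      have a3 := hW.nonneg c d
      have h' : W a d * (1 - W c d) = W a d * (1 - W b d) * (1 - W c d) := by linarith
      rw [h']
      exact mul_le_of_le_one_right (mul_nonneg a1 (by linarith)) (by linarith)
    rw [rr_eq hW ha, rr_eq hW ha] at this
    linarith

lemma TT_meas (hW : Ker W) : MeasurableSet {q : (X × X) × X | TT μ W q.1.1 q.1.2 q.2} := by
  have k : ∀ {f g : (X × X) × X → X}, Measurable f → Measurable g →
      Measurable fun q => W (f q) (g q) := fun hf hg => (BM.ker2 hW hf hg).1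
  have r : ∀ {f g : (X × X) × X → X}, Measurable f → Measurable g →
      Measurable fun q => rr μ W (f q) (g q) := fun hf hg =>
    ((BM_rr2 (μ := μ) hW).comp (hf.prodMk hg)).1
  have e : ∀ {f : (X × X) × X → ℝ} (c : ℝ), Measurable f → Measurable fun q => f q = c :=
    fun c hf => measurableSet_setOfPred.1 (hf (measurableSet_singleton c))
  have kxy := k (f := fun q => q.1.1) (g := fun q => q.1.2) (by fun_prop) (by fun_prop)
  have kxz := k (f := fun q => q.1.1) (g := fun q => q.2) (by fun_prop) (by fun_prop)
  have kyz := k (f := fun q => q.1.2) (g := fun q => q.2) (by fun_prop) (by fun_prop)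
  have l : Measurable fun q : (X × X) × X => rr μ W q.1.1 q.2 ≤ rr μ W q.1.1 q.1.2 :=
    measurableSet_setOfPred.1 (measurableSet_le (r (by fun_prop) (by fun_prop)) (r (by fun_prop) (by fun_prop)))
  exact measurableSet_setOfPred.2
    (((e 1 kxy).imp ((e 0 kxz).imp ((e 1 kyz).imp l))).and
      ((e 0 kxy).imp ((e 1 kxz).imp ((e 0 kyz).imp l))))

lemma swap_in {T : X → X → X → Prop} (hT : MeasurableSet {q : (X × X) × X | T q.1.1 q.1.2 q.2})
    (h : ∀ᵐ x ∂μ, ∀ᵐ y ∂μ, ∀ᵐ z ∂μ, T x y z) : ∀ᵐ x ∂μ, ∀ᵐ y ∂μ, ∀ᵐ z ∂μ, T x z y := by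
  filter_upwards [h] with x hx
  refine (Measure.ae_ae_comm (p := fun y z => T x y z) ?_).1 hx
  exact (show Measurable fun p : X × X => ((x, p.1), p.2) by fun_prop) hT

lemma swap_out {T : X → X → X → Prop} (hT : MeasurableSet {q : (X × X) × X | T q.1.1 q.1.2 q.2})
    (h : ∀ᵐ x ∂μ, ∀ᵐ y ∂μ, ∀ᵐ z ∂μ, T x y z) : ∀ᵐ x ∂μ, ∀ᵐ y ∂μ, ∀ᵐ z ∂μ, T y x z := by
  refine (Measure.ae_ae_comm (p := fun x y => ∀ᵐ z ∂μ, T x y z) ?_).1 h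
  have h1 := measurable_measure_prodMk_left (ν := μ) hT.compl
  exact h1 (measurableSet_singleton 0)

/-- Everything needed around a single point. -/
lemma axMain (hW : Ker W) (hA : Ax μ W) : ∀ᵐ x ∂μ,
    (∀ d : ℕ, μ.real {y | rr μ W x y ≤ (1 / 2) ^ d} = (1 / 2) ^ d) ∧
    ∀ᵐ y ∂μ, ∃ d : ℕ, rr μ W x y = (1 / 2) ^ d ∧ W x y = if Even d then 1 else 0 := by
  filter_upwards [ax01 hW hA, axT hW hA, swap_in (TT_meas hW) (axT hW hA), hA.deg, hA.k1, hA.k0, hA.m]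
    with x h01 hT hT' hd hk1 hk0 hm
  set N : Set X := {z | W x z = 1} with hN
  have hNm : MeasurableSet N := (hW.bm1 x).1 (measurableSet_singleton 1)
  have hr := BM_rr (μ := μ) hW x
  have hloc : Loc μ (rr μ W x) N := by
    refine ⟨hr, hNm, ?_, ?_⟩
    · filter_upwards [ax01 hW hA, hT, hT', hA.deg, hk1] with y y01 hT hT' hdy hk hyN
      have hyN : W x y = 1 := hyN
      have hSm : MeasurableSet (Nᶜ ∩ {z | W y z = 1}) :=
        hNm.compl.inter ((hW.bm1 y).1 (measurableSet_singleton 1))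
      have key : ∀ᵐ z ∂μ, (1 - W x z) * W y z = (Nᶜ ∩ {z | W y z = 1}).indicator (fun _ => 1) z := by
        filter_upwards [h01, y01] with z a b
        simp only [Set.indicator, Set.mem_inter_iff, Set.mem_compl_iff, hN, Set.mem_ofPred_eq]
        rcases a with a | a <;> rcases b with b | b <;> simp [a, b]
      refine ⟨Nᶜ ∩ {z | W y z = 1}, hSm, Set.inter_subset_left, ?_, ?_, ?_, ?_⟩
      · rw [← rr_eq' hW hdy, integral_congr_ae key, integral_indicator hSm]
        simp
      · have := hk.resolve_left (by rw [hyN]; norm_num)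
        rw [← this, ← integral_indicator hSm]
        apply integral_congr_ae
        filter_upwards [key] with z hz
        rw [hz]
        simp only [Set.indicator]
        split_ifs <;> simp
      · filter_upwards [hT, h01] with z hT h01 hz
        exact hT.1 hyN (h01.resolve_right hz.1) hz.2
      · filter_upwards [hT', h01, y01] with z hT h01 y01 hz hz'
        have hxz := h01.resolve_right hz
        have hyz : W y z = 0 := y01.resolve_right fun h => hz' ⟨hz, h⟩
        exact hT.2 hxz hyN (by rw [hW.symm, hyz])
    · filter_upwards [ax01 hW hA, hT, hT', hA.deg, hk0, h01] with y y01 hT hT' hdy hk xy01 hyN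
      have hyN : W x y = 0 := xy01.resolve_right hyN
      have hSm : MeasurableSet (N ∩ {z | W y z = 0}) :=
        hNm.inter ((hW.bm1 y).1 (measurableSet_singleton 0))
      have key : ∀ᵐ z ∂μ, W x z * (1 - W y z) = (N ∩ {z | W y z = 0}).indicator (fun _ => 1) z := by
        filter_upwards [h01, y01] with z a b
        simp only [Set.indicator, Set.mem_inter_iff, hN, Set.mem_ofPred_eq]
        rcases a with a | a <;> rcases b with b | b <;> simp [a, b]
      refine ⟨N ∩ {z | W y z = 0}, hSm, Set.inter_subset_left, ?_, ?_, ?_, ?_⟩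
      · rw [← rr_eq hW hd, integral_congr_ae key, integral_indicator hSm]
        simp
      · have := hk.resolve_left (by rw [hyN]; norm_num)
        rw [← this, ← integral_indicator hSm]
        apply integral_congr_ae
        filter_upwards [key] with z hz
        rw [hz]
        simp only [Set.indicator]
        split_ifs <;> simp
      · filter_upwards [hT] with z hT hz
        exact hT.2 hyN hz.1 hz.2
      · filter_upwards [hT', y01] with z hT y01 hz hz'
        have hyz : W y z = 1 := y01.resolve_left fun h => hz' ⟨hz, h⟩
        exact hT.1 hz hyN (by rw [hW.symm, hyz])
  have hle : ∀ᵐ y ∂μ, rr μ W x y ≤ 1 := by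
    filter_upwards [hA.deg] with y hy using rr_le_one hW hd hy
  have keyN : ∀ᵐ z ∂μ, W x z = N.indicator (fun _ => 1) z := by
    filter_upwards [h01] with z a
    simp only [Set.indicator, hN, Set.mem_ofPred_eq]
    rcases a with a | a <;> simp [a]
  have hmN : μ.real N = 2 / 3 := by
    rw [← hd, integral_congr_ae keyN, integral_indicator hNm]; simp
  have hiN : ∫ z in N, rr μ W x z ∂μ = 8 / 15 := by
    rw [← hm, ← integral_indicator hNm]
    apply integral_congr_ae
    filter_upwards [keyN] with z hz
    rw [hz]
    simp only [Set.indicator]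
    split_ifs <;> simp
  have htot : ∫ z, rr μ W x z ∂μ = 2 / 3 := by
    have hsw : ∫ y, ∫ z, W x z * W y z ∂μ ∂μ = 4 / 9 := by
      have hb : BM (fun p : X × X => W x p.2 * W p.1 p.2) :=
        (BM.ker2 hW (by fun_prop) (by fun_prop)).mul (BM.ker2 hW (by fun_prop) (by fun_prop))
      rw [integral_integral_swap (f := fun y z => W x z * W y z) (hb.integrable (μ.prod μ))]
      have : ∀ᵐ z ∂μ, ∫ y, W x z * W y z ∂μ = W x z * (2 / 3) := by
        filter_upwards [hA.deg] with z hz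
        rw [integral_const_mul, ← hz]
        simp only [hW.symm z]
      rw [integral_congr_ae this, integral_mul_const, hd]
      norm_num
    have hb : BM (fun y => ∫ z, W x z * W y z ∂μ) :=
      BM.int (f := fun p : X × X => W x p.2 * W p.1 p.2)
       ((BM.ker2 hW (by fun_prop) (by fun_prop)).mul (BM.ker2 hW (by fun_prop) (by fun_prop))) μ
    unfold rr
    rw [integral_sub (bint (BM.const 2)) (bint ((BM.const 3).mul hb)), integral_const_mul, hsw]
    simp; norm_num
  have e1 : ∀ Q : Set X, (Q ∩ {z | rr μ W x z ≤ 1} : Set X) =ᵐ[μ] Q := by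
    intro Q
    filter_upwards [hle] with z hz
    exact propext ⟨fun h => h.1, fun h => ⟨h, hz⟩⟩
  have hLv : Lv μ (rr μ W x) 1 N := by
    refine ⟨?_, ?_, ?_, ?_⟩
    · rw [measureReal_congr (e1 _), hmN]; norm_num
    · rw [measureReal_congr (e1 _), probReal_compl_eq_one_sub hNm, hmN]; norm_num
    · rw [setIntegral_congr_set (e1 _), hiN]; norm_num
    · rw [setIntegral_congr_set (e1 _)]
      have := integral_add_compl hNm (bint (μ := μ) hr)
      rw [hiN, htot] at this
      linarith
  obtain ⟨r1, r2⟩ := hloc.main hLv hle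
  refine ⟨r1, ?_⟩
  filter_upwards [r2, h01] with y ⟨d, hd1, hd2⟩ hy
  refine ⟨d, hd1, ?_⟩
  have hd2 : W x y = 1 ↔ Even d := hd2
  split_ifs with he
  · exact hd2.2 he
  · exact hy.resolve_right fun h => he (hd2.1 h)

/-- The separation depth. -/
def dl (μ : Measure X) (W : X → X → ℝ) (x y : X) : ℕ := ⌊-Real.logb 2 (rr μ W x y)⌋₊

lemma dl_eq {x y : X} {d : ℕ} (h : rr μ W x y = (1 / 2) ^ d) : dl μ W x y = d := by
  unfold dl
  rw [h, Real.logb_pow, one_div, Real.logb_inv, Real.logb_self_eq_one (by norm_num)]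
  simp

lemma ult_aux {p q r : ℕ} (h : (1 / 2 : ℝ) ^ p ≤ (1 / 2) ^ q + (1 / 2) ^ r) (h1 : p < q) (h2 : p < r) :
    q = p + 1 ∧ r = p + 1 := by
  have hpos : (0 : ℝ) < (1 / 2) ^ p := by positivity
  have mono : ∀ {a b : ℕ}, a ≤ b → (1 / 2 : ℝ) ^ b ≤ (1 / 2) ^ a := fun hab =>
    pow_le_pow_of_le_one (by norm_num) (by norm_num) hab
  have a1 := mono (show p + 1 ≤ q by omega)
  have a2 := mono (show p + 1 ≤ r by omega)
  rw [pow_succ] at a1 a2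
  constructor
  · by_contra hc
    have := mono (show p + 2 ≤ q by omega)
    rw [pow_add] at this
    norm_num at this
    linarith
  · by_contra hc
    have := mono (show p + 2 ≤ r by omega)
    rw [pow_add] at this
    norm_num at this
    linarith

/-- The base case of the exclusion of bad triangles. -/
lemma TT.excl {x y z : X} {p q r : ℕ} (hT : TT μ W x y z)
    (hq : rr μ W x y = (1 / 2) ^ q) (hp : rr μ W x z = (1 / 2) ^ p)
    (wq : W x y = if Even q then 1 else 0) (wp : W x z = if Even p then 1 else 0)
    (wr : W y z = if Even r then 1 else 0) (h1 : q = p + 1) (h2 : r = p + 1) : False := by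
  have hh : rr μ W x z ≤ rr μ W x y := by
    subst h1 h2
    by_cases hp : Even p
    · have : ¬ Even (p + 1) := by rw [Nat.even_add_one]; simpa using hp
      simp only [hp, this, if_true, if_false] at wq wp wr
      exact hT.2 wq wp wr
    · have : Even (p + 1) := by rw [Nat.even_add_one]; exact hp
      simp only [hp, this, if_true, if_false] at wq wp wr
      exact hT.1 wq wp wr
  rw [hp, hq, h1, pow_succ] at hh
  have hpos : (0 : ℝ) < (1 / 2) ^ p := by positivity
  linarith

theorem ax_ts (hW : Ker W) (hA : Ax μ W) : TS μ W (dl μ W) := by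
  have main := axMain hW hA
  have T1 := axT hW hA
  have Tm := TT_meas (μ := μ) hW
  refine ⟨?_, ?_, ?_, ?_, ?_⟩
  · unfold dl
    have := (BM_rr2 (μ := μ) hW).1
    have h2 : Measurable (fun p : X × X => -Real.logb 2 (rr μ W p.1 p.2)) := by
      unfold Real.logb
      exact ((Real.measurable_log.comp this).div_const _).neg
    exact Nat.measurable_floor.comp h2
  · intro x y
    unfold dl
    rw [rr_symm]
  · filter_upwards [main] with x hx
    filter_upwards [hx.2] with y ⟨d, h1, h2⟩
    rw [dl_eq h1, h2]
  · filter_upwards [main] with x hx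
    intro d
    rw [← hx.1 d]
    apply measureReal_congr
    filter_upwards [hx.2] with y ⟨e, h1, h2⟩
    apply propext
    show d ≤ dl μ W x y ↔ rr μ W x y ≤ (1 / 2) ^ d
    rw [dl_eq h1, h1, pow_le_pow_iff_right_of_lt_one₀ (by norm_num) (by norm_num)]
  · filter_upwards [main, T1, swap_in Tm T1, swap_out Tm T1, hA.deg] with x mx t1 t2 t3 dx
    filter_upwards [mx.2, main, t1, t2, t3, hA.deg] with y ⟨p, rp, wp⟩ my t1 t2 t3 dy
    filter_upwards [mx.2, my.2, t1, t2, t3, hA.deg] with z ⟨q, rq, wq⟩ ⟨r, hr, wr⟩ t1 t2 t3 dz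
    rw [dl_eq rp, dl_eq rq, dl_eq hr]
    have i1 := rr_tri (z := z) hW dx dy
    have i2 := rr_tri (z := y) hW dx dz
    have i3 := rr_tri (z := z) hW dy dx
    rw [rr_symm z y] at i2
    rw [rr_symm y x] at i3
    rw [rp, rq, hr] at i1 i2 i3
    have rp' := rp; have wp' := wp; have hr' := hr; have wr' := wr
    rw [rr_symm] at rp' hr'
    rw [hW.symm] at wp' wr'
    refine ⟨?_, ?_, ?_⟩
    · by_contra hc
      -- yz is the longest edge
      obtain ⟨e1, e2⟩ := ult_aux i3 (by omega) (by omega)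
      exact t3.excl rp' hr wp' wr wq e1 e2
    · by_contra hc
      -- xy is the longest edge
      obtain ⟨e1, e2⟩ := ult_aux i2 (by omega) (by omega)
      exact t2.excl rq rp wq wp wr' e1 e2
    · by_contra hc
      obtain ⟨e1, e2⟩ := ult_aux i1 (by omega) (by omega)
      exact t1.excl rp rq wp wq wr e1 e2

end axts
end FF

namespace FF
variable {X Y : Type} [MeasurableSpace X] [MeasurableSpace Y]

section pairs
variable {μ : Measure X} [IsProbabilityMeasure μ]

lemma mp_pair {n : ℕ} {i j : Fin n} (hij : i ≠ j) :
    MeasurePreserving (fun x : Fin n → X => (x i, x j)) (Measure.pi fun _ => μ) (μ.prod μ) := by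
  refine ⟨by fun_prop, ?_⟩
  have h := ProbabilityTheory.iIndepFun_pi (μ := fun _ : Fin n => μ) (X := fun _ x => x)
    (fun _ => aemeasurable_id)
  have h2 := (ProbabilityTheory.indepFun_iff_map_prod_eq_prod_map_map
    (measurable_pi_apply i).aemeasurable (measurable_pi_apply j).aemeasurable).1 (h.indepFun hij)
  rw [h2, (measurePreserving_eval (fun _ : Fin n => μ) i).map_eq,
    (measurePreserving_eval (fun _ : Fin n => μ) j).map_eq]

lemma ae_pair {p : X → X → Prop} (hp : MeasurableSet {q : X × X | p q.1 q.2})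
    (h : ∀ᵐ x ∂μ, ∀ᵐ y ∂μ, p x y) (n : ℕ) :
    ∀ᵐ x ∂(Measure.pi fun _ : Fin n => μ), ∀ i j, i ≠ j → p (x i) (x j) := by
  rw [ae_all_iff]; intro i
  rw [ae_all_iff]; intro j
  by_cases hij : i = j
  · simp [hij]
  · have := (Measure.ae_prod_iff_ae_ae hp).2 h
    filter_upwards [(mp_pair (μ := μ) hij).quasiMeasurePreserving.ae this] with x hx _
    exact hx

lemma ae_one {p : X → Prop} (h : ∀ᵐ x ∂μ, p x) (n : ℕ) :
    ∀ᵐ x ∂(Measure.pi fun _ : Fin n => μ), ∀ i, p (x i) := by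
  rw [ae_all_iff]; intro i
  exact (measurePreserving_eval (fun _ : Fin n => μ) i).quasiMeasurePreserving.ae h

end pairs

/-- The matrix of separation depths. -/
def mat (δ : X → X → ℕ) {n : ℕ} (x : Fin n → X) : Fin n → Fin n → ℕ :=
  fun i j => if i < j then δ (x i) (x j) else 0

/-- Extension of a matrix by a new first row. -/
def extm {n : ℕ} (m : Fin n → Fin n → ℕ) (v : Fin n → ℕ) : Fin (n + 1) → Fin (n + 1) → ℕ :=
  fun i j => Fin.cases (Fin.cases 0 (fun j' => v j') j) (fun i' => Fin.cases 0 (fun j' => m i' j') j) i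

lemma mat_cons {δ : X → X → ℕ} (hs : ∀ x y, δ x y = δ y x) {n : ℕ} (z : X) (x : Fin n → X) :
    mat δ (Fin.cons z x : Fin (n + 1) → X) = extm (mat δ x) (fun j => δ (x j) z) := by
  funext i j
  refine Fin.cases ?_ (fun i' => ?_) i
  · refine Fin.cases ?_ (fun j' => ?_) j
    · simp [mat, extm]
    · simp [mat, extm, hs z]
  · refine Fin.cases ?_ (fun j' => ?_) j
    · simp [mat, extm]
    · simp [mat, extm]

/-- Mass of an upper orthant. -/
def hh {n : ℕ} (m : Fin n → Fin n → ℕ) (d : Fin n → ℕ) : ℝ :=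
  if ∀ i j, i < j → min (d i) (d j) ≤ m i j then (1 / 2) ^ (Finset.univ.sup d) else 0

lemma uniq {n : ℕ} {κ κ' : Measure (Fin n → ℕ)} [IsProbabilityMeasure κ] [IsProbabilityMeasure κ']
    (h : ∀ d, κ.real (Set.Ici d) = κ'.real (Set.Ici d)) : κ = κ' := by
  refine ext_of_generate_finite (Set.range (Set.Ici : (Fin n → ℕ) → Set (Fin n → ℕ))) ?_ ?_ ?_ ?_
  · apply le_antisymm
    · refine iSup_le fun i => ?_
      rw [← measurable_iff_comap_le]
      letI : MeasurableSpace (Fin n → ℕ) := MeasurableSpace.generateFrom (Set.range Set.Ici)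
      refine measurable_of_Ici (f := fun v : Fin n → ℕ => v i) fun a => ?_
      apply MeasurableSpace.measurableSet_generateFrom
      refine ⟨Pi.single i a, ?_⟩
      ext v
      simp only [Set.mem_Ici, Set.mem_preimage]
      constructor
      · intro h; simpa using h i
      · intro h j
        by_cases hj : j = i
        · subst hj; simpa using h
        · simp [hj]
    · apply MeasurableSpace.generateFrom_le
      rintro _ ⟨d, rfl⟩
      exact (Set.to_countable _).measurableSet
  · rintro _ ⟨a, rfl⟩ _ ⟨b, rfl⟩ _
    exact ⟨a ⊔ b, Set.Ici_inter_Ici.symm⟩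
  · rintro _ ⟨d, rfl⟩
    have := h d
    rwa [measureReal_def, measureReal_def, ENNReal.toReal_eq_toReal_iff' (measure_ne_top _ _) (measure_ne_top _ _)] at this
  · simp

/-- The conditional expectation over a new point, as a function of the matrix. -/
def gg {n : ℕ} (F : (Fin (n + 1) → Fin (n + 1) → ℕ) → ℝ) (m : Fin n → Fin n → ℕ) : ℝ :=
  if h : ∃ κ : Measure (Fin n → ℕ), IsProbabilityMeasure κ ∧ ∀ d, κ.real (Set.Ici d) = hh m d then
    ∫ v, F (extm m v) ∂h.choose else 0

lemma gg_bound {n : ℕ} {F : (Fin (n + 1) → Fin (n + 1) → ℕ) → ℝ} {C : ℝ} (hC : ∀ m, |F m| ≤ C) (m) :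
    |gg F m| ≤ C := by
  have hC0 : 0 ≤ C := (abs_nonneg _).trans (hC 0)
  unfold gg
  split_ifs with h
  · have := h.choose_spec.1
    have := norm_integral_le_of_norm_le_const (μ := h.choose) (f := fun v => F (extm m v)) (C := C)
      (Filter.Eventually.of_forall fun y => hC _)
    simpa using this
  · simpa using hC0

section law
variable {μ : Measure X} [IsProbabilityMeasure μ] {W : X → X → ℝ} {δ : X → X → ℕ}

lemma meas_mat (hT : TS μ W δ) (n : ℕ) : Measurable (fun x : Fin n → X => mat δ x) := by
  refine measurable_pi_iff.2 fun i => measurable_pi_iff.2 fun j => ?_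
  unfold mat
  split_ifs
  · have : Measurable fun x : Fin n → X => (x i, x j) := by fun_prop
    exact hT.meas.comp this
  · exact measurable_const

lemma ult_meas (hT : TS μ W δ) : MeasurableSet {q : X × X | ∀ᵐ z ∂μ, Ult (δ q.1 q.2) (δ q.1 z) (δ q.2 z)} := by
  have d : ∀ {f g : (X × X) × X → X}, Measurable f → Measurable g → Measurable fun q => δ (f q) (g q) :=
    fun hf hg => hT.meas.comp (hf.prodMk hg)
  have a := d (f := fun q => q.1.1) (g := fun q => q.1.2) (by fun_prop) (by fun_prop)
  have b := d (f := fun q => q.1.1) (g := fun q => q.2) (by fun_prop) (by fun_prop)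
  have c := d (f := fun q => q.1.2) (g := fun q => q.2) (by fun_prop) (by fun_prop)
  have hU : MeasurableSet {q : (X × X) × X | Ult (δ q.1.1 q.1.2) (δ q.1.1 q.2) (δ q.1.2 q.2)} :=
    (measurableSet_le (a.min b) c).inter ((measurableSet_le (b.min c) a).inter (measurableSet_le (a.min c) b))
  have h1 := measurable_measure_prodMk_left (ν := μ) hU.compl
  exact h1 (measurableSet_singleton 0)

lemma mass_box (hT : TS μ W δ) {n : ℕ} {x : Fin n → X}
    (hu : ∀ i j, i ≠ j → ∀ᵐ z ∂μ, Ult (δ (x i) (x j)) (δ (x i) z) (δ (x j) z))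
    (hm : ∀ i, ∀ d : ℕ, μ.real {y | d ≤ δ (x i) y} = (1 / 2) ^ d) (d : Fin n → ℕ) :
    μ.real {z | ∀ j, d j ≤ δ (x j) z} = hh (mat δ x) d := by
  unfold hh
  have hu' : ∀ᵐ z ∂μ, ∀ i j, i ≠ j → Ult (δ (x i) (x j)) (δ (x i) z) (δ (x j) z) := by
    rw [ae_all_iff]; intro i
    rw [ae_all_iff]; intro j
    by_cases hij : i = j
    · simp [hij]
    · filter_upwards [hu i j hij] with z hz _ using hz
  split_ifs with hc
  · rcases n with _ | n
    · simp
    · obtain ⟨j, -, hj⟩ := Finset.exists_mem_eq_sup (Finset.univ : Finset (Fin (n + 1))) ⟨0, by simp⟩ d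
      rw [hj, ← hm j]
      apply measureReal_congr
      filter_upwards [hu'] with z hz
      apply propext
      show (∀ i, d i ≤ δ (x i) z) ↔ d j ≤ δ (x j) z
      refine ⟨fun h => h j, fun h i => ?_⟩
      by_cases hij : i = j
      · rw [hij]; exact h
      · have hle : d i ≤ d j := by rw [← hj]; exact Finset.le_sup (Finset.mem_univ i)
        have h1 : d i ≤ δ (x i) (x j) := by
          rcases lt_or_gt_of_ne hij with h2 | h2
          · have := hc i j h2
            simp only [mat, if_pos h2] at this
            omega
          · have := hc j i h2
            simp only [mat, if_pos h2] at this
            rw [hT.symm]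
            omega
        obtain ⟨u1, u2, u3⟩ := hz i j hij
        omega
  · push Not at hc
    obtain ⟨i, j, hij, hlt⟩ := hc
    simp only [mat, if_pos hij] at hlt
    rw [measureReal_eq_zero_iff]
    have : ∀ᵐ z ∂μ, ¬ ∀ j, d j ≤ δ (x j) z := by
      filter_upwards [hu'] with z hz h
      obtain ⟨u1, u2, u3⟩ := hz i j hij.ne
      have := h i
      have := h j
      omega
    rw [ae_iff] at this
    simpa only [not_not] using this

lemma inner_eq (hT : TS μ W δ) {n : ℕ} {x : Fin n → X}
    (hu : ∀ i j, i ≠ j → ∀ᵐ z ∂μ, Ult (δ (x i) (x j)) (δ (x i) z) (δ (x j) z))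
    (hm : ∀ i, ∀ d : ℕ, μ.real {y | d ≤ δ (x i) y} = (1 / 2) ^ d)
    (F : (Fin (n + 1) → Fin (n + 1) → ℕ) → ℝ) :
    ∫ z, F (mat δ (Fin.cons z x : Fin (n + 1) → X)) ∂μ = gg F (mat δ x) := by
  have hmeas : Measurable (fun z => fun j => δ (x j) z) := measurable_pi_iff.2 fun j => hT.meas1 (x j)
  set κ := μ.map (fun z => fun j => δ (x j) z) with hκ
  have hp : IsProbabilityMeasure κ := Measure.isProbabilityMeasure_map hmeas.aemeasurable
  have hκd : ∀ d, κ.real (Set.Ici d) = hh (mat δ x) d := by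
    intro d
    rw [hκ, map_measureReal_apply hmeas (Set.to_countable _).measurableSet, ← mass_box hT hu hm d]
    rfl
  have hex : ∃ κ : Measure (Fin n → ℕ), IsProbabilityMeasure κ ∧ ∀ d, κ.real (Set.Ici d) = hh (mat δ x) d :=
    ⟨κ, hp, hκd⟩
  unfold gg
  rw [dif_pos hex]
  have hp' := hex.choose_spec.1
  have : hex.choose = κ := uniq fun d => by rw [hκd, hex.choose_spec.2]
  rw [this, hκ, integral_map hmeas.aemeasurable (measurable_of_countable _).aestronglyMeasurable]
  simp only [mat_cons hT.symm]

lemma law_step (hT : TS μ W δ) {n : ℕ} (F : (Fin (n + 1) → Fin (n + 1) → ℕ) → ℝ)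
    (hF : ∃ C, ∀ m, |F m| ≤ C) :
    ∫ x, F (mat δ x) ∂(Measure.pi fun _ : Fin (n + 1) => μ) =
    ∫ x, gg F (mat δ x) ∂(Measure.pi fun _ : Fin n => μ) := by
  obtain ⟨C, hC⟩ := hF
  have hb : BM (fun x : Fin (n + 1) → X => F (mat δ x)) :=
    ⟨(measurable_of_countable F).comp (meas_mat hT _), C, fun x => hC _⟩
  rw [int_cons' hb]
  apply integral_congr_ae
  filter_upwards [ae_pair (ult_meas hT) hT.ult n, ae_one hT.mass n] with x h1 h2
  exact inner_eq hT h1 h2 F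
end law

lemma law_eq {μ : Measure X} [IsProbabilityMeasure μ] {W : X → X → ℝ} {δ : X → X → ℕ}
    {ν : Measure Y} [IsProbabilityMeasure ν] {V : Y → Y → ℝ} {ε : Y → Y → ℕ}
    (hT : TS μ W δ) (hS : TS ν V ε) (n : ℕ) (F : (Fin n → Fin n → ℕ) → ℝ)
    (hF : ∃ C, ∀ m, |F m| ≤ C) :
    ∫ x, F (mat δ x) ∂(Measure.pi fun _ : Fin n => μ) =
    ∫ y, F (mat ε y) ∂(Measure.pi fun _ : Fin n => ν) := by
  induction n with
  | zero =>
    rw [int_zero, int_zero]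
    congr 1
    funext i
    exact i.elim0
  | succ n ih =>
    rw [law_step hT F hF, law_step hS F hF]
    obtain ⟨C, hC⟩ := hF
    exact ih (gg F) ⟨C, gg_bound hC⟩

/-- The product of the parities along the edges of a graph. -/
def parF {n : ℕ} (G : SimpleGraph (Fin n)) (m : Fin n → Fin n → ℕ) : ℝ :=
  ∏ p ∈ Finset.univ.filter (fun p : Fin n × Fin n => p.1 < p.2 ∧ G.Adj p.1 p.2),
    if Even (m p.1 p.2) then 1 else 0

lemma dens_parF {μ : Measure X} [IsProbabilityMeasure μ] {W : X → X → ℝ} {δ : X → X → ℕ}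
    (hW : Ker W) (hT : TS μ W δ) {n : ℕ} (G : SimpleGraph (Fin n)) :
    dens G μ W = ∫ x, parF G (mat δ x) ∂(Measure.pi fun _ : Fin n => μ) := by
  have hm : MeasurableSet {q : X × X | W q.1 q.2 = if Even (δ q.1 q.2) then 1 else 0} := by
    refine measurableSet_eq_fun hW.meas ?_
    exact (measurable_of_countable (fun k : ℕ => if Even k then (1 : ℝ) else 0)).comp hT.meas
  apply integral_congr_ae
  filter_upwards [ae_pair hm hT.par n] with x hx
  apply Finset.prod_congr rfl
  intro p hp
  have hp := (Finset.mem_filter.1 hp).2.1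
  rw [hx _ _ hp.ne]
  simp [mat, hp]

theorem dens_eq {μ : Measure X} [IsProbabilityMeasure μ] {W : X → X → ℝ} {δ : X → X → ℕ}
    {ν : Measure Y} [IsProbabilityMeasure ν] {V : Y → Y → ℝ} {ε : Y → Y → ℕ}
    (hW : Ker W) (hV : Ker V) (hT : TS μ W δ) (hS : TS ν V ε) {n : ℕ} (G : SimpleGraph (Fin n)) :
    dens G μ W = dens G ν V := by
  rw [dens_parF hW hT, dens_parF hV hS]
  apply law_eq hT hS
  refine ⟨1, fun m => ?_⟩
  unfold parF
  rw [Finset.abs_prod]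
  apply Finset.prod_le_one
  · intros; positivity
  · intros; split_ifs <;> simp

end FF

namespace FF

/-- Agreement of the first `d` bits. -/
def RR (d : ℕ) (x y : ℕ → Fin 4) : Prop :=
  (∀ i, i < d / 2 → x i = y i) ∧ (d % 2 = 1 → (x (d / 2)).val % 2 = (y (d / 2)).val % 2)

/-- Number of agreeing bits. -/
def db (x y : ℕ → Fin 4) : ℕ :=
  if h : x = y then 0
  else 2 * Nat.find (Function.ne_iff.mp h) +
    if (x (Nat.find (Function.ne_iff.mp h))).val % 2 = (y (Nat.find (Function.ne_iff.mp h))).val % 2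
    then 1 else 0

lemma le_db {x y : ℕ → Fin 4} (h : x ≠ y) (d : ℕ) : d ≤ db x y ↔ RR d x y := by
  unfold db RR
  rw [dif_neg h]
  have h1 := Nat.find_spec (Function.ne_iff.mp h)
  have h2 : ∀ i, i < Nat.find (Function.ne_iff.mp h) → x i = y i := fun i hi => by
    by_contra hc; exact Nat.find_min _ hi hc
  generalize Nat.find (Function.ne_iff.mp h) = k at *
  constructor
  · intro hd
    split_ifs at hd with hp
    · refine ⟨fun i hi => h2 i (by omega), fun ho => ?_⟩
      by_cases hk : d / 2 = k
      · rw [hk]; exact hp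
      · rw [h2 _ (by omega)]
    · exact ⟨fun i hi => h2 i (by omega), fun ho => by rw [h2 _ (by omega)]⟩
  · rintro ⟨a, b⟩
    by_contra hd
    have hk : d / 2 ≤ k := by
      by_contra hc
      exact h1 (a k (by omega))
    split_ifs at hd with hp
    · omega
    · have e : d / 2 = k := by omega
      rw [e] at b
      exact hp (b (by omega))

lemma RR_symm {d : ℕ} {x y : ℕ → Fin 4} (h : RR d x y) : RR d y x :=
  ⟨fun i hi => (h.1 i hi).symm, fun ho => (h.2 ho).symm⟩

lemma RR_trans {d : ℕ} {x y z : ℕ → Fin 4} (h : RR d x y) (h' : RR d y z) : RR d x z :=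
  ⟨fun i hi => (h.1 i hi).trans (h'.1 i hi), fun ho => (h.2 ho).trans (h'.2 ho)⟩

lemma db_symm (x y : ℕ → Fin 4) : db x y = db y x := by
  by_cases h : x = y
  · rw [h]
  · apply le_antisymm
    · rw [le_db (Ne.symm h)]; exact RR_symm ((le_db h _).1 le_rfl)
    · rw [le_db h]; exact RR_symm ((le_db (Ne.symm h) _).1 le_rfl)

lemma db_min {x y z : ℕ → Fin 4} (h1 : x ≠ y) (h2 : y ≠ z) (h3 : x ≠ z) :
    min (db x y) (db y z) ≤ db x z := by
  rw [le_db h3]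
  exact RR_trans ((le_db h1 _).1 (min_le_left _ _)) ((le_db h2 _).1 (min_le_right _ _))

lemma fin4a : ∀ a b : Fin 4, a ≠ b → ((a - b = 1 ∨ a - b = 3) ↔ ¬ a.val % 2 = b.val % 2) := by decide
lemma fin4b : ∀ a b : Fin 4, a.val % 2 = b.val % 2 ↔ (b = a ∨ b = a + 2) := by decide
lemma fin4c : ∀ a : Fin 4, a + 2 ≠ a := by decide

lemma UB_eq (x y : ℕ → Fin 4) : UB x y = if x = y then 0 else if Even (db x y) then 1 else 0 := by
  unfold UB db
  by_cases h : x = y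
  · simp [h]
  · rw [dif_neg h, dif_neg h, if_neg h]
    have h1 := Nat.find_spec (Function.ne_iff.mp h)
    generalize Nat.find (Function.ne_iff.mp h) = k at *
    have := fin4a _ _ h1
    by_cases hp : (x k).val % 2 = (y k).val % 2
    · rw [if_neg (by rw [this]; simpa using hp), if_pos hp, if_neg]
      rw [Nat.even_iff]; omega
    · rw [if_pos (this.2 hp), if_neg hp, if_pos]
      rw [Nat.even_iff]; omega

lemma meas_coord (i : ℕ) : Measurable fun p : (ℕ → Fin 4) × (ℕ → Fin 4) => p.1 i = p.2 i :=
  measurableSet_setOfPred.1 (measurableSet_eq_fun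
    ((measurable_pi_apply i).comp measurable_fst) ((measurable_pi_apply i).comp measurable_snd))

lemma meas_diag : MeasurableSet {p : (ℕ → Fin 4) × (ℕ → Fin 4) | p.1 = p.2} := by
  have : {p : (ℕ → Fin 4) × (ℕ → Fin 4) | p.1 = p.2} = {p | ∀ i, p.1 i = p.2 i} := by
    ext p; exact funext_iff
  rw [this]
  exact measurableSet_setOfPred.2 (Measurable.forall meas_coord)

lemma meas_RR (d : ℕ) : MeasurableSet {p : (ℕ → Fin 4) × (ℕ → Fin 4) | RR d p.1 p.2} := by
  refine measurableSet_setOfPred.2 (Measurable.and (Measurable.forall fun i =>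
    Measurable.imp measurable_const (meas_coord i)) (Measurable.imp measurable_const ?_))
  have m : Measurable fun a : Fin 4 => a.val % 2 := measurable_of_countable _
  exact measurableSet_setOfPred.1 (measurableSet_eq_fun
    (m.comp ((measurable_pi_apply (d / 2)).comp measurable_fst))
    (m.comp ((measurable_pi_apply (d / 2)).comp measurable_snd)))

lemma meas_db : Measurable (Function.uncurry db) := by
  refine measurable_of_Ici fun d => ?_
  by_cases hd : d = 0
  · subst hd
    have : Function.uncurry db ⁻¹' Set.Ici 0 = Set.univ := by ext; simp
    rw [this]; exact MeasurableSet.univ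
  · have : Function.uncurry db ⁻¹' Set.Ici d =
        {p : (ℕ → Fin 4) × (ℕ → Fin 4) | p.1 = p.2}ᶜ ∩ {p | RR d p.1 p.2} := by
      ext ⟨x, y⟩
      show d ≤ db x y ↔ x ≠ y ∧ RR d x y
      by_cases h : x = y
      · subst h
        have : db x x = 0 := by simp [db]
        rw [this]; simp [hd]
      · rw [le_db h]; simp [h]
    rw [this]
    exact meas_diag.compl.inter (meas_RR d)

lemma UB_ker : Ker UB := by
  refine ⟨?_, ?_, ?_, ?_⟩
  · have : Function.uncurry UB = fun p : (ℕ → Fin 4) × (ℕ → Fin 4) =>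
        if p.1 = p.2 then 0 else (fun k : ℕ => if Even k then (1 : ℝ) else 0) (Function.uncurry db p) := by
      funext ⟨x, y⟩; exact UB_eq x y
    rw [this]
    exact Measurable.ite meas_diag measurable_const 
      ((measurable_of_countable (fun k : ℕ => if Even k then (1 : ℝ) else 0)).comp meas_db)
  · intro x y; rw [UB_eq, UB_eq, db_symm]; simp only [eq_comm]
  · intro x y; rw [UB_eq]; split_ifs <;> norm_num
  · intro x y; rw [UB_eq]; split_ifs <;> norm_num

section ub
variable {μ : Measure (ℕ → Fin 4)} [IsProbabilityMeasure μ]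

lemma cyl (hcyl : ∀ (n : ℕ) (s : Fin n → Fin 4),
      μ {x : ℕ → Fin 4 | ∀ k : Fin n, x k = s k} = (1/4 : ENNReal) ^ (n : ℕ)) (n : ℕ) (t : ℕ → Fin 4) :
    μ.real {y | ∀ i, i < n → t i = y i} = (1 / 4) ^ n := by
  have : {y | ∀ i, i < n → t i = y i} = {x : ℕ → Fin 4 | ∀ k : Fin n, x k = t k} := by
    ext y
    exact ⟨fun h k => (h k k.2).symm, fun h i hi => (h ⟨i, hi⟩).symm⟩
  rw [this, measureReal_def, hcyl n fun k => t k]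
  simp

lemma meas_cyl (n : ℕ) (t : ℕ → Fin 4) : MeasurableSet {y : ℕ → Fin 4 | ∀ i, i < n → t i = y i} := by
  refine measurableSet_setOfPred.2 (Measurable.forall fun i => Measurable.imp measurable_const ?_)
  exact measurableSet_setOfPred.1 (measurableSet_eq_fun measurable_const (measurable_pi_apply i))

lemma RR_mass (hcyl : ∀ (n : ℕ) (s : Fin n → Fin 4),
      μ {x : ℕ → Fin 4 | ∀ k : Fin n, x k = s k} = (1/4 : ENNReal) ^ (n : ℕ)) (x : ℕ → Fin 4) (d : ℕ) :
    μ.real {y | RR d x y} = (1 / 2) ^ d := by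
  rcases Nat.even_or_odd' d with ⟨k, hk | hk⟩
  · have : {y | RR d x y} = {y | ∀ i, i < k → x i = y i} := by
      ext y
      have e : d / 2 = k := by omega
      simp only [RR, e, Set.mem_ofPred_eq]
      exact ⟨fun h => h.1, fun h => ⟨h, fun ho => by omega⟩⟩
    rw [this, cyl hcyl, hk, pow_mul]; norm_num
  · set x' := Function.update x k (x k + 2) with hx'
    have hxi : ∀ i, i < k → x' i = x i := fun i hi => Function.update_of_ne hi.ne _ _
    have hxk : x' k = x k + 2 := Function.update_self _ _ _
    have : {y | RR d x y} = {y | ∀ i, i < k + 1 → x i = y i} ∪ {y | ∀ i, i < k + 1 → x' i = y i} := by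
      ext y
      have e : d / 2 = k := by omega
      simp only [RR, e, Set.mem_ofPred_eq, Set.mem_union, fin4b]
      constructor
      · rintro ⟨a, b⟩
        rcases b (by omega) with b | b
        · left; intro i hi
          rcases Nat.lt_succ_iff_lt_or_eq.1 hi with h | h
          · exact a i h
          · rw [h, b]
        · right; intro i hi
          rcases Nat.lt_succ_iff_lt_or_eq.1 hi with h | h
          · rw [hxi i h]; exact a i h
          · rw [h, b, hxk]
      · rintro (a | a)
        · exact ⟨fun i hi => a i (by omega), fun _ => Or.inl (a k (by omega)).symm⟩
        · exact ⟨fun i hi => by rw [← hxi i hi]; exact a i (by omega), fun _ => Or.inr (by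
            rw [← a k (by omega), hxk])⟩
    rw [this, measureReal_union _ (meas_cyl _ _), cyl hcyl, cyl hcyl, hk, pow_succ, pow_succ, pow_mul]
    · norm_num; ring
    · rw [Set.disjoint_left]
      intro y h1 h2
      have a := h1 k (by omega)
      have b := h2 k (by omega)
      rw [hxk, ← a] at b
      exact fin4c _ b

lemma ae_ne (hcyl : ∀ (n : ℕ) (s : Fin n → Fin 4),
      μ {x : ℕ → Fin 4 | ∀ k : Fin n, x k = s k} = (1/4 : ENNReal) ^ (n : ℕ)) (x : ℕ → Fin 4) :
    ∀ᵐ y ∂μ, x ≠ y := by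
  have : μ.real {y | x = y} = 0 := by
    refine le_antisymm ?_ measureReal_nonneg
    refine ge_of_tendsto' (tendsto_pow_atTop_nhds_zero_of_lt_one (r := (1 / 2 : ℝ)) (by norm_num) (by norm_num)) fun d => ?_
    rw [← RR_mass hcyl x d]
    refine measureReal_mono fun y hy => ?_
    have hy : x = y := hy
    subst hy
    exact ⟨fun _ _ => rfl, fun _ => rfl⟩
  rw [measureReal_eq_zero_iff] at this
  rw [ae_iff]
  simpa only [ne_eq, not_not] using this

theorem UB_TS (hcyl : ∀ (n : ℕ) (s : Fin n → Fin 4),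
      μ {x : ℕ → Fin 4 | ∀ k : Fin n, x k = s k} = (1/4 : ENNReal) ^ (n : ℕ)) : TS μ UB db := by
  refine ⟨meas_db, db_symm, ?_, ?_, ?_⟩
  · refine Filter.Eventually.of_forall fun x => ?_
    filter_upwards [ae_ne hcyl x] with y hy
    rw [UB_eq, if_neg hy]
  · refine Filter.Eventually.of_forall fun x d => ?_
    rw [← RR_mass hcyl x d]
    apply measureReal_congr
    filter_upwards [ae_ne hcyl x] with y hy
    exact propext (le_db hy d)
  · refine Filter.Eventually.of_forall fun x => ?_
    filter_upwards [ae_ne hcyl x] with y hxy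
    filter_upwards [ae_ne hcyl x, ae_ne hcyl y] with z hxz hyz
    refine ⟨?_, ?_, ?_⟩
    · rw [db_symm x y]; exact db_min hxy.symm hxz hyz
    · rw [db_symm y z]; exact db_min hxz hyz.symm hxy
    · exact db_min hxy hyz hxz

end ub

/-- Restriction of a kernel to the unit square. -/
def cut (W : ℝ → ℝ → ℝ) (x y : ℝ) : ℝ := if x ∈ I01 ∧ y ∈ I01 then W x y else 0

lemma meas_I01 : MeasurableSet I01 := measurableSet_Icc

lemma cut_ker {W : ℝ → ℝ → ℝ} (hW : memW0 W) : Ker (cut W) := by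
  obtain ⟨h1, h2, h3⟩ := hW
  refine ⟨?_, ?_, ?_, ?_⟩
  · exact Measurable.ite (meas_I01.prod meas_I01) h1 measurable_const
  · intro x y
    unfold cut
    by_cases h : x ∈ I01 ∧ y ∈ I01
    · rw [if_pos h, if_pos h.symm, h2 x h.1 y h.2]
    · rw [if_neg h, if_neg fun h' => h h'.symm]
  · intro x y
    unfold cut
    split_ifs with h
    · exact (h3 x h.1 y h.2).1
    · exact le_rfl
  · intro x y
    unfold cut
    split_ifs with h
    · exact (h3 x h.1 y h.2).2
    · exact zero_le_one

instance : IsProbabilityMeasure (volume.restrict I01 : Measure ℝ) :=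
  ⟨by simp [I01]⟩

lemma homDensity_eq (W : ℝ → ℝ → ℝ) {n : ℕ} (G : SimpleGraph (Fin n)) :
    homDensity G W = dens G (volume.restrict I01) (cut W) := by
  unfold homDensity dens
  rw [← Measure.restrict_pi_pi, ← volume_pi]
  refine setIntegral_congr_fun (MeasurableSet.univ_pi fun _ => meas_I01) fun x hx => ?_
  apply Finset.prod_congr rfl
  intro p _
  unfold cut
  rw [if_pos ⟨hx p.1 trivial, hx p.2 trivial⟩]

end FF

/-- with `μ` the product of the uniform probability measures on
`{0,1,2,3}` (characterized by its values `4^{-n}` on cylinder sets), the graphon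
`U_B` is finitely forcible: finitely many density constraints `t(Fᵢ,W) = t(Fᵢ,U_B)`
force `t(F,W) = t(F,U_B)` for all finite simple graphs `F`. -/
theorem statement15 (μ : Measure (ℕ → Fin 4)) [IsProbabilityMeasure μ]
    (hcyl : ∀ (n : ℕ) (s : Fin n → Fin 4),
      μ {x : ℕ → Fin 4 | ∀ k : Fin n, x k = s k} = (1/4 : ENNReal) ^ (n : ℕ)) :
    ∃ (m : ℕ) (nn : Fin m → ℕ) (F : ∀ i, SimpleGraph (Fin (nn i))),
      ∀ W : ℝ → ℝ → ℝ, memW0 W →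
        (∀ i, homDensity (F i) W = tUB (F i) μ) →
        ∀ (n : ℕ) (G : SimpleGraph (Fin n)), homDensity G W = tUB G μ := by
  refine ⟨Fintype.card (SimpleGraph (Fin 6)), fun _ => 6,
    fun i => (Fintype.equivFin (SimpleGraph (Fin 6))).symm i, fun W hW hi n G => ?_⟩
  have hK := FF.cut_ker hW
  have hG : ∀ G : SimpleGraph (Fin 6),
      FF.dens G (volume.restrict I01) (FF.cut W) = FF.dens G μ UB := by
    intro G
    have := hi (Fintype.equivFin _ G)
    simp only [Equiv.symm_apply_apply] at this
    rw [FF.homDensity_eq] at this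
    exact this
  have hT := FF.UB_TS hcyl
  have hA := FF.transferAx hK FF.UB_ker hG hT
  rw [FF.homDensity_eq, FF.dens_eq hK FF.UB_ker (FF.ax_ts hK hA) hT G]
  rfl
end
end

section
/- Let q be a non-constant symmetric real polynomial in two variables with q(x,y) ∈ [0,1] for all (x,y) ∈ [0,1]², and let W ∈ 𝒲₀ be defined by W(x,y) = q(x,y). Then W is not finitely forcible in 𝒲. -/
open MeasureTheory
open scoped Classical

noncomputable section

/-- The convex hull of a compact set in a finite-dimensional space is closed. -/
lemma isClosed_convexHull_of_compact {d : ℕ} {s : Set (Fin d → ℝ)} (hs : IsCompact s) :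
    IsClosed (convexHull ℝ s) := by
  let Φ : (Fin (d + 1) → ℝ) × (Fin (d + 1) → (Fin d → ℝ)) → (Fin d → ℝ) :=
    fun p => ∑ i, p.1 i • p.2 i
  have hΦ : Continuous Φ := by fun_prop
  have hK : IsCompact (Φ '' (stdSimplex ℝ (Fin (d + 1)) ×ˢ (Set.univ.pi fun _ => s))) :=
    ((isCompact_stdSimplex ℝ (Fin (d + 1))).prod (isCompact_univ_pi fun _ => hs)).image hΦ
  suffices h : convexHull ℝ s = Φ '' (stdSimplex ℝ (Fin (d + 1)) ×ˢ (Set.univ.pi fun _ => s)) by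
    rw [h]; exact hK.isClosed
  apply Set.Subset.antisymm
  · intro x hx
    obtain ⟨ι, _, z, w, hz, hind, hw, hw1, hx⟩ := eq_pos_convex_span_of_mem_convexHull hx
    have hcard : Fintype.card ι ≤ d + 1 := by
      have := hind.card_le_finrank_succ
      have h2 : Module.finrank ℝ (vectorSpan ℝ (Set.range z)) ≤ d := by
        simpa using Submodule.finrank_le (vectorSpan ℝ (Set.range z))
      omega
    have hne : Nonempty ι := by
      by_contra h
      rw [not_nonempty_iff] at h
      simp at hw1
    obtain ⟨e⟩ : Nonempty (ι ↪ Fin (d + 1)) :=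
      Function.Embedding.nonempty_of_card_le (by simpa using hcard)
    let g := Function.invFun e
    have hg : ∀ i, g (e i) = i := Function.leftInverse_invFun e.injective
    let wt : Fin (d + 1) → ℝ := fun j => if e (g j) = j then w (g j) else 0
    have hwzero : ∀ j, j ∉ Set.range e → wt j = 0 := by
      intro j hj
      have : ¬ e (g j) = j := fun h => hj ⟨_, h⟩
      simp [wt, this]
    have hwext : ∀ i, wt (e i) = w i := by
      intro i; simp [wt, hg]
    refine ⟨(wt, z ∘ g), ⟨⟨?_, ?_⟩, ?_⟩, ?_⟩
    · intro j
      simp only [wt]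
      split_ifs
      · exact (hw _).le
      · exact le_rfl
    · rw [← hw1]
      exact (Fintype.sum_of_injective e e.injective _ _ hwzero (fun i => (hwext i).symm)).symm
    · intro j _
      exact hz ⟨_, rfl⟩
    · rw [← hx]
      refine (Fintype.sum_of_injective e e.injective _ _ (fun j hj => ?_) (fun i => ?_)).symm
      · simp [hwzero j hj]
      · simp [hwext, hg]
  · rintro _ ⟨⟨w, z⟩, ⟨⟨hw, hw1⟩, hz⟩, rfl⟩
    exact mem_convexHull_of_exists_fintype w z hw hw1 (fun i => hz i trivial) rfl

/-- The uniform measure on the unit interval. -/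
def nu0 : Measure ℝ := volume.restrict (Set.Icc 0 1)

instance : IsProbabilityMeasure nu0 := ⟨by simp [nu0]⟩

lemma nu0_restrict : nu0.restrict (Set.Icc 0 1) = nu0 := by
  simp [nu0]

lemma integrable_of_cont {E : Type*} [NormedAddCommGroup E] {ν : Measure ℝ} [IsProbabilityMeasure ν]
    (hν : ν.restrict (Set.Icc 0 1) = ν) {f : ℝ → E} (hf : Continuous f) : Integrable f ν := by
  rw [← hν]
  exact hf.continuousOn.integrableOn_compact isCompact_Icc

/-- A finitely supported quadrature, realized by a measurable function. -/
lemma exists_quad (D : ℕ) : ∃ f : ℝ → ℝ, Measurable f ∧ (∀ x, f x ∈ Set.Icc (0 : ℝ) 1) ∧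
    (Set.range f).Finite ∧ ∀ j ≤ D, ∫ x, (f x) ^ j ∂nu0 = ∫ x, x ^ j ∂nu0 := by
  let φ : ℝ → (Fin (D + 1) → ℝ) := fun x j => x ^ (j : ℕ)
  have hφ : Continuous φ := by fun_prop
  have hint : Integrable φ nu0 := integrable_of_cont nu0_restrict hφ
  have hmem : ∫ x, φ x ∂nu0 ∈ convexHull ℝ (φ '' Set.Icc 0 1) := by
    refine (convex_convexHull ℝ _).integral_mem
      (isClosed_convexHull_of_compact (isCompact_Icc.image hφ)) ?_ hint
    refine (ae_restrict_mem measurableSet_Icc).mono fun x hx => ?_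
    exact subset_convexHull ℝ _ ⟨x, hx, rfl⟩
  obtain ⟨ι, _, w, z, hw, hw1, hz, hsum⟩ := mem_convexHull_iff_exists_fintype.1 hmem
  choose y hy hyz using hz
  have hne : Nonempty ι := by
    by_contra h
    rw [not_nonempty_iff] at h
    simp at hw1
  let _ : MeasurableSpace ι := ⊤
  have : DiscreteMeasurableSpace ι := ⟨fun _ => trivial⟩
  let μ : Measure ι := ∑ i, ENNReal.ofReal (w i) • Measure.dirac i
  have : IsProbabilityMeasure μ := ⟨by
    simp only [μ, Measure.coe_finsetSum, Finset.sum_apply, Measure.smul_apply, measure_univ,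
      smul_eq_mul, mul_one]
    rw [← ENNReal.ofReal_sum_of_nonneg (fun i _ => hw i), hw1, ENNReal.ofReal_one]⟩
  obtain ⟨f, hf, hfμ⟩ := μ.exists_measurable_map_eq
  have hproj : Measurable (Set.projIcc (0 : ℝ) 1 zero_le_one) :=
    (continuous_projIcc).measurable
  have hy_meas : Measurable y := measurable_from_top
  refine ⟨fun x => y (f (Set.projIcc 0 1 zero_le_one x)), hy_meas.comp (hf.comp hproj),
    fun x => hy _, (Set.finite_range y).subset ?_, fun j hj => ?_⟩
  · rintro _ ⟨x, rfl⟩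
    exact ⟨_, rfl⟩
  · have h1 : ∫ x, (y (f (Set.projIcc 0 1 zero_le_one x))) ^ j ∂nu0
        = ∫ u : unitInterval, (y (f u)) ^ j := by
      rw [nu0, ← integral_subtype_comap measurableSet_Icc]
      refine integral_congr_ae (Filter.Eventually.of_forall fun u => ?_)
      simp only [Set.projIcc_val]
    have h2 : ∫ u : unitInterval, (y (f u)) ^ j = ∫ i, y i ^ j ∂μ := by
      rw [← hfμ, integral_map hf.aemeasurable]
      exact (measurable_from_top.aestronglyMeasurable)
    have h3 : ∫ i, y i ^ j ∂μ = ∑ i, w i * y i ^ j := by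
      simp only [μ]
      rw [integral_finsetSum_measure]
      · refine Finset.sum_congr rfl fun i _ => ?_
        rw [integral_smul_measure, integral_dirac, ENNReal.toReal_ofReal (hw i), smul_eq_mul]
      · intro i _
        exact Integrable.smul_measure (integrable_dirac (by simp)) (by simp)
    have h4 : ∫ x, x ^ j ∂nu0 = (∫ x, φ x ∂nu0) ⟨j, by omega⟩ := by
      rw [eval_integral (fun i => hint.eval i)]
    rw [h1, h2, h3, h4, ← hsum]
    simp [Finset.sum_apply, ← hyz, φ]

lemma pi_restrict {ν : Measure ℝ} [IsProbabilityMeasure ν]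
    (hν : ν.restrict (Set.Icc 0 1) = ν) (n : ℕ) :
    (Measure.pi fun _ : Fin n => ν).restrict (Set.univ.pi fun _ => Set.Icc 0 1) =
      Measure.pi fun _ : Fin n => ν := by
  rw [Measure.restrict_pi_pi]
  simp only [hν]

lemma integrable_pi_of_cont {ν : Measure ℝ} [IsProbabilityMeasure ν]
    (hν : ν.restrict (Set.Icc 0 1) = ν) {n : ℕ} {H : (Fin n → ℝ) → ℝ} (hH : Continuous H) :
    Integrable H (Measure.pi fun _ : Fin n => ν) := by
  rw [← pi_restrict hν n]
  exact hH.continuousOn.integrableOn_compact (isCompact_univ_pi fun _ => isCompact_Icc)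

lemma continuous_int {X : Type*} [TopologicalSpace X] [FirstCountableTopology X]
    [LocallyCompactSpace X] {ν : Measure ℝ} [IsProbabilityMeasure ν]
    (hν : ν.restrict (Set.Icc 0 1) = ν) {G : X → ℝ → ℝ} (hG : Continuous fun p : X × ℝ => G p.1 p.2) :
    Continuous fun a => ∫ b, G a b ∂ν := by
  have := continuous_parametric_integral_of_continuous (μ := ν) (f := G) hG (s := Set.Icc 0 1) isCompact_Icc
  rwa [hν] at this

lemma cont_right {G : ℝ → ℝ → ℝ} (h : Continuous fun p : ℝ × ℝ => G p.1 p.2) (a : ℝ) :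
    Continuous fun b => G a b :=
  h.comp (by fun_prop : Continuous fun b : ℝ => (a, b))

lemma integral_pi_succ {ν : Measure ℝ} [IsProbabilityMeasure ν]
    (hν : ν.restrict (Set.Icc 0 1) = ν) {n : ℕ} {H : (Fin (n + 1) → ℝ) → ℝ} (hH : Continuous H) :
    ∫ x, H x ∂(Measure.pi fun _ : Fin (n + 1) => ν) =
      ∫ a, ∫ z, H (Fin.cons a z) ∂(Measure.pi fun _ : Fin n => ν) ∂ν := by
  have mp := (measurePreserving_piFinSuccAbove (fun _ : Fin (n + 1) => ν) 0).symm
  have e : ∀ (a : ℝ) (z : Fin n → ℝ),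
      (MeasurableEquiv.piFinSuccAbove (fun _ : Fin (n + 1) => ℝ) 0).symm (a, z) = Fin.cons a z := by
    intro a z
    exact Fin.insertNth_zero' a z
  rw [← mp.integral_comp', integral_prod]
  · simp only [e]
  · exact (mp.integrable_comp_emb (MeasurableEquiv.measurableEmbedding _)).2
      (integrable_pi_of_cont hν hH)

lemma continuous_q {X : Type*} [TopologicalSpace X] (q : MvPolynomial (Fin 2) ℝ) {f g : X → ℝ}
    (hf : Continuous f) (hg : Continuous g) :
    Continuous fun x => MvPolynomial.eval ![f x, g x] q := by
  refine (MvPolynomial.continuous_eval q).comp (continuous_pi fun i => ?_)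
  fin_cases i
  · exact hf
  · exact hg

lemma measurable_q {X : Type*} [MeasurableSpace X] (q : MvPolynomial (Fin 2) ℝ) {f g : X → ℝ}
    (hf : Measurable f) (hg : Measurable g) :
    Measurable fun x => MvPolynomial.eval ![f x, g x] q := by
  refine (MvPolynomial.continuous_eval q).measurable.comp (measurable_pi_lambda _ fun i => ?_)
  fin_cases i
  · exact hf
  · exact hg

/-- Homomorphism density of the polynomial kernel over the probability measure `ν`. -/
def Tq (q : MvPolynomial (Fin 2) ℝ) {n : ℕ} (F : SimpleGraph (Fin n)) (ν : Measure ℝ) : ℝ :=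
  ∫ x, ∏ p ∈ Finset.univ.filter (fun p : Fin n × Fin n => p.1 < p.2 ∧ F.Adj p.1 p.2),
      MvPolynomial.eval ![x p.1, x p.2] q ∂(Measure.pi fun _ : Fin n => ν)

lemma homDensity_eq (q : MvPolynomial (Fin 2) ℝ) {n : ℕ} (F : SimpleGraph (Fin n))
    {f : ℝ → ℝ} (hf : Measurable f) :
    homDensity F (fun x y => MvPolynomial.eval ![f x, f y] q) = Tq q F (nu0.map f) := by
  have : IsProbabilityMeasure (nu0.map f) := Measure.isProbabilityMeasure_map hf.aemeasurable
  have mp := measurePreserving_pi (fun _ : Fin n => nu0) (fun _ : Fin n => nu0.map f)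
    (f := fun _ => f) (fun _ => ⟨hf, rfl⟩)
  rw [Tq, ← mp.map_eq, integral_map mp.measurable.aemeasurable]
  · rw [homDensity, cube, volume_pi, Measure.restrict_pi_pi]
    rfl
  · refine Continuous.aestronglyMeasurable (continuous_finsetProd _ fun p _ => ?_)
    exact continuous_q q (continuous_apply _) (continuous_apply _)

lemma Tq_moments (q : MvPolynomial (Fin 2) ℝ) {n : ℕ} (F : SimpleGraph (Fin n)) :
    ∃ D : ℕ, ∀ (ν νb : Measure ℝ) [IsProbabilityMeasure ν] [IsProbabilityMeasure νb],
      ν.restrict (Set.Icc 0 1) = ν → νb.restrict (Set.Icc 0 1) = νb →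
      (∀ j ≤ D, ∫ x, x ^ j ∂ν = ∫ x, x ^ j ∂νb) → Tq q F ν = Tq q F νb := by
  let P : MvPolynomial (Fin n) ℝ :=
    ∏ p ∈ Finset.univ.filter (fun p : Fin n × Fin n => p.1 < p.2 ∧ F.Adj p.1 p.2),
      MvPolynomial.rename ![p.1, p.2] q
  have hP : ∀ x : Fin n → ℝ, ∏ p ∈ Finset.univ.filter
      (fun p : Fin n × Fin n => p.1 < p.2 ∧ F.Adj p.1 p.2),
      MvPolynomial.eval ![x p.1, x p.2] q = MvPolynomial.eval x P := by
    intro x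
    simp only [P, map_prod]
    refine Finset.prod_congr rfl fun p _ => ?_
    rw [MvPolynomial.eval_rename]
    congr 2
    ext i
    fin_cases i <;> rfl
  have hT : ∀ (ν : Measure ℝ) [IsProbabilityMeasure ν], ν.restrict (Set.Icc 0 1) = ν →
      Tq q F ν = ∑ d ∈ P.support, P.coeff d * ∏ i, ∫ x, x ^ d i ∂ν := by
    intro ν _ hν
    simp only [Tq, hP]
    simp only [MvPolynomial.eval_eq']
    rw [integral_finsetSum]
    · refine Finset.sum_congr rfl fun d _ => ?_
      rw [integral_const_mul]
      congr 1
      exact integral_fintype_prod_eq_prod (fun i x => x ^ d i)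
    · intro d _
      exact integrable_pi_of_cont hν (by fun_prop)
  refine ⟨P.totalDegree, fun ν νb _ _ hν hνb hm => ?_⟩
  rw [hT ν hν, hT νb hνb]
  refine Finset.sum_congr rfl fun d hd => ?_
  congr 1
  refine Finset.prod_congr rfl fun i _ => hm _ ?_
  refine le_trans ?_ (MvPolynomial.le_totalDegree hd)
  rw [Finsupp.sum_fintype _ _ (fun _ => rfl)]
  exact Finset.single_le_sum (f := fun i => d i) (fun _ _ => Nat.zero_le _) (Finset.mem_univ i)

/-- The complete bipartite graph with sides of sizes `2` and `k`. -/
def K2 (k : ℕ) : SimpleGraph (Fin (k + 2)) where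
  Adj a b := (a.val < 2 ∧ 2 ≤ b.val) ∨ (b.val < 2 ∧ 2 ≤ a.val)
  symm := ⟨fun _ _ h => h.symm⟩
  loopless := ⟨fun a h => by omega⟩

lemma prod_K2 (k : ℕ) (G : Fin (k + 2) → Fin (k + 2) → ℝ) :
    ∏ p ∈ Finset.univ.filter (fun p : Fin (k + 2) × Fin (k + 2) => p.1 < p.2 ∧ (K2 k).Adj p.1 p.2),
      G p.1 p.2 = ∏ j : Fin k, (G 0 j.succ.succ * G 1 j.succ.succ) := by
  rw [Finset.prod_filter, Fintype.prod_prod_type, Fin.prod_univ_succ, Fin.prod_univ_succ]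
  simp only [Fin.prod_univ_succ (n := k + 1), Fin.prod_univ_succ (n := k)]
  have h : ∀ i : Fin k, ∀ j, ¬ (i.succ.succ < j ∧ (K2 k).Adj i.succ.succ j) := by
    rintro i j ⟨h1, h2⟩
    simp only [K2, Fin.val_succ, Fin.lt_def] at h1 h2
    omega
  have hadjA : ∀ j : Fin k, ((0 : Fin (k + 2)) < j.succ.succ ∧ (K2 k).Adj 0 j.succ.succ) := by
    intro j
    simp [K2, Fin.lt_def]
  have hadjB : ∀ j : Fin k, ((Fin.succ 0 : Fin (k + 2)) < j.succ.succ ∧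
      (K2 k).Adj (Fin.succ 0) j.succ.succ) := by
    intro j
    simp [K2, Fin.lt_def]
  simp only [h, hadjA, hadjB, if_false, Finset.prod_const_one, mul_one]
  rw [Finset.prod_mul_distrib]
  have e1 : ¬ ((0 : Fin (k + 2)) < Fin.succ 0 ∧ (K2 k).Adj 0 (Fin.succ 0)) := by simp [K2]
  have e2 : ¬ ((Fin.succ 0 : Fin (k + 2)) < 0 ∧ (K2 k).Adj (Fin.succ 0) 0) := by simp [K2]
  change _ = (∏ j : Fin k, G 0 j.succ.succ) * ∏ j : Fin k, G (Fin.succ 0) j.succ.succ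
  simp only [lt_self_iff_false, false_and, if_false, e1, e2, one_mul, and_self, if_true]

/-- The composition kernel. -/
def Mq (q : MvPolynomial (Fin 2) ℝ) (ν : Measure ℝ) (a b : ℝ) : ℝ :=
  ∫ z, MvPolynomial.eval ![a, z] q * MvPolynomial.eval ![b, z] q ∂ν

lemma Tq_K2 (q : MvPolynomial (Fin 2) ℝ) (k : ℕ) {ν : Measure ℝ} [IsProbabilityMeasure ν]
    (hν : ν.restrict (Set.Icc 0 1) = ν) :
    Tq q (K2 k) ν = ∫ a, ∫ b, Mq q ν a b ^ k ∂ν ∂ν := by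
  have hH : Continuous fun x : Fin (k + 2) → ℝ => ∏ j : Fin k,
      (MvPolynomial.eval ![x 0, x j.succ.succ] q * MvPolynomial.eval ![x 1, x j.succ.succ] q) :=
    continuous_finsetProd _ fun p _ =>
      (continuous_q q (continuous_apply _) (continuous_apply _)).mul
        (continuous_q q (continuous_apply _) (continuous_apply _))
  have e : ∀ x : Fin (k + 2) → ℝ, _ := fun x =>
    prod_K2 k (fun a b => MvPolynomial.eval ![x a, x b] q)
  simp only [Tq]
  simp only [e]
  rw [integral_pi_succ hν hH]
  congr 1
  ext a
  rw [integral_pi_succ hν]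
  · congr 1
    ext b
    have := integral_fintype_prod_eq_pow (ι := Fin k) (μ := ν)
      (fun z => MvPolynomial.eval ![a, z] q * MvPolynomial.eval ![b, z] q)
    rw [Fintype.card_fin] at this
    rw [Mq, ← this]
    rfl
  · exact hH.comp (by fun_prop : Continuous fun z : Fin (k + 1) → ℝ =>
      (Fin.cons a z : Fin (k + 2) → ℝ))

lemma continuous_Mq (q : MvPolynomial (Fin 2) ℝ) {ν : Measure ℝ} [IsProbabilityMeasure ν]
    (hν : ν.restrict (Set.Icc 0 1) = ν) : Continuous fun p : ℝ × ℝ => Mq q ν p.1 p.2 := by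
  refine continuous_int hν (G := fun (p : ℝ × ℝ) z =>
    MvPolynomial.eval ![p.1, z] q * MvPolynomial.eval ![p.2, z] q) ?_
  exact (continuous_q q (by fun_prop) (by fun_prop)).mul (continuous_q q (by fun_prop) (by fun_prop))

lemma integral_poly_Mq (q : MvPolynomial (Fin 2) ℝ) {ν : Measure ℝ} [IsProbabilityMeasure ν]
    (hν : ν.restrict (Set.Icc 0 1) = ν) (P : Polynomial ℝ) :
    ∫ a, ∫ b, P.eval (Mq q ν a b) ∂ν ∂ν =
      ∑ k ∈ Finset.range (P.natDegree + 1), P.coeff k * Tq q (K2 k) ν := by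
  have hM := continuous_Mq q hν
  have hMright : ∀ a, Continuous fun b => Mq q ν a b := fun a =>
    cont_right (G := Mq q ν) hM a
  have h1 : ∀ a, ∫ b, P.eval (Mq q ν a b) ∂ν =
      ∑ k ∈ Finset.range (P.natDegree + 1), P.coeff k * ∫ b, Mq q ν a b ^ k ∂ν := by
    intro a
    simp only [Polynomial.eval_eq_sum_range]
    rw [integral_finsetSum]
    · simp only [integral_const_mul]
    · intro k _
      exact integrable_of_cont hν (continuous_const.mul ((hMright a).pow k))
  simp only [h1]
  rw [integral_finsetSum]
  · simp only [integral_const_mul, Tq_K2 q _ hν]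
  · intro k _
    refine integrable_of_cont hν (continuous_const.mul ?_)
    exact continuous_int hν (G := fun a b => Mq q ν a b ^ k) (hM.pow k)

lemma eq_zero_of_int {h : ℝ → ℝ} (hc : Continuous h) (h0 : ∀ x, 0 ≤ h x)
    (hi : ∫ x, h x ∂nu0 = 0) : ∀ x ∈ Set.Icc (0 : ℝ) 1, h x = 0 := by
  have := (integral_eq_zero_iff_of_nonneg h0 (integrable_of_cont nu0_restrict hc)).1 hi
  exact Measure.eqOn_Icc_of_ae_eq (μ := volume) zero_ne_one this hc.continuousOn continuousOn_const

lemma q_const (q : MvPolynomial (Fin 2) ℝ)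
    (hsym : ∀ x y : ℝ, MvPolynomial.eval ![x, y] q = MvPolynomial.eval ![y, x] q)
    (c : ℝ) (hc : ∀ a ∈ Set.Icc (0 : ℝ) 1, ∀ b ∈ Set.Icc (0 : ℝ) 1, Mq q nu0 a b = c) :
    ∃ c : ℝ, ∀ x y : ℝ, MvPolynomial.eval ![x, y] q = c := by
  have key : ∀ a ∈ Set.Icc (0 : ℝ) 1, ∀ b ∈ Set.Icc (0 : ℝ) 1, ∀ z ∈ Set.Icc (0 : ℝ) 1,
      MvPolynomial.eval ![a, z] q = MvPolynomial.eval ![b, z] q := by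
    intro a ha b hb z hz
    have hcont : ∀ a, Continuous fun z => MvPolynomial.eval ![a, z] q := fun a =>
      continuous_q q continuous_const continuous_id
    have hint : ∀ a b, Integrable
        (fun z => MvPolynomial.eval ![a, z] q * MvPolynomial.eval ![b, z] q) nu0 := fun a b =>
      integrable_of_cont nu0_restrict ((hcont a).mul (hcont b))
    have h0 : ∫ z, (MvPolynomial.eval ![a, z] q - MvPolynomial.eval ![b, z] q) ^ 2 ∂nu0 = 0 := by
      have e : ∀ z, (MvPolynomial.eval ![a, z] q - MvPolynomial.eval ![b, z] q) ^ 2 =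
          MvPolynomial.eval ![a, z] q * MvPolynomial.eval ![a, z] q -
          2 * (MvPolynomial.eval ![a, z] q * MvPolynomial.eval ![b, z] q) +
          MvPolynomial.eval ![b, z] q * MvPolynomial.eval ![b, z] q := fun z => by ring
      simp only [e]
      have hab := (hint a a).sub ((hint a b).const_mul 2)
      rw [integral_add (f := fun z => MvPolynomial.eval ![a, z] q * MvPolynomial.eval ![a, z] q -
          2 * (MvPolynomial.eval ![a, z] q * MvPolynomial.eval ![b, z] q)) hab (hint b b),
        integral_sub (hint a a) ((hint a b).const_mul 2), integral_const_mul]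
      have h1 := hc a ha a ha
      have h2 := hc a ha b hb
      have h3 := hc b hb b hb
      unfold Mq at h1 h2 h3
      rw [h1, h2, h3]
      ring
    have := eq_zero_of_int (((hcont a).sub (hcont b)).pow 2) (fun z => sq_nonneg _) h0 z hz
    exact sub_eq_zero.1 (pow_eq_zero_iff two_ne_zero |>.1 this)
  have h0 : (0 : ℝ) ∈ Set.Icc (0 : ℝ) 1 := by simp
  have hq : q = MvPolynomial.C (MvPolynomial.eval ![0, 0] q) := by
    refine MvPolynomial.funext_set (fun _ => Set.Icc (0 : ℝ) 1)
      (fun _ => Set.Icc_infinite zero_lt_one) fun x hx => ?_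
    have hx0 := hx 0 trivial
    have hx1 := hx 1 trivial
    have ex : x = ![x 0, x 1] := by
      ext i; fin_cases i <;> rfl
    rw [MvPolynomial.eval_C, ex, key _ hx0 0 h0 _ hx1, hsym, key _ hx1 0 h0 _ h0]
  refine ⟨MvPolynomial.eval ![0, 0] q, fun x y => ?_⟩
  conv_lhs => rw [hq]
  rw [MvPolynomial.eval_C]

/-- a graphon given by a non-constant symmetric two-variable real
polynomial with values in `[0,1]` on `[0,1]²` is not finitely forcible in `𝒲`. -/
theorem statement19 (q : MvPolynomial (Fin 2) ℝ)
    (hsym : ∀ x y : ℝ, MvPolynomial.eval ![x, y] q = MvPolynomial.eval ![y, x] q)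
    (hnc : ¬ ∃ c : ℝ, ∀ x y : ℝ, MvPolynomial.eval ![x, y] q = c)
    (hrange : ∀ x ∈ I01, ∀ y ∈ I01, MvPolynomial.eval ![x, y] q ∈ Set.Icc (0 : ℝ) 1) :
    ¬ FinitelyForcible memW (fun x y => MvPolynomial.eval ![x, y] q) := by
  rintro ⟨-, k, n, F, hF⟩
  choose D hD using fun i => Tq_moments q (F i)
  obtain ⟨f, hf, hf01, hfin, hmom⟩ := exists_quad (Finset.univ.sup D)
  set ν := nu0.map f with hνdef
  have hprob : IsProbabilityMeasure ν := Measure.isProbabilityMeasure_map hf.aemeasurable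
  have hrangeAe : ∀ᵐ a ∂ν, a ∈ Set.range f := by
    refine (ae_map_iff hf.aemeasurable (p := fun a => a ∈ Set.range f) hfin.measurableSet).2 ?_
    exact Filter.Eventually.of_forall fun x => ⟨x, rfl⟩
  have hν : ν.restrict (Set.Icc 0 1) = ν := by
    refine Measure.restrict_eq_self_of_ae_mem (hrangeAe.mono ?_)
    rintro _ ⟨x, rfl⟩
    exact hf01 x
  have hid : ∀ {n : ℕ} (F : SimpleGraph (Fin n)),
      homDensity F (fun x y => MvPolynomial.eval ![x, y] q) = Tq q F nu0 := by
    intro n F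
    have := homDensity_eq q F measurable_id
    rwa [Measure.map_id] at this
  have hcongr : ∀ j ≤ Finset.univ.sup D, ∫ x, x ^ j ∂ν = ∫ x, x ^ j ∂nu0 := by
    intro j hj
    rw [← hmom j hj, hνdef, integral_map hf.aemeasurable]
    exact (continuous_pow j).aestronglyMeasurable
  have hweak := hF (fun x y => MvPolynomial.eval ![f x, f y] q) ?_ ?_
  · have hT : ∀ k, Tq q (K2 k) ν = Tq q (K2 k) nu0 := by
      intro k
      have := hweak _ (K2 k)
      rwa [hid, homDensity_eq q _ hf] at this
    have hV : (Set.image2 (Mq q ν) (Set.range f) (Set.range f)).Finite := hfin.image2 _ hfin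
    let P : Polynomial ℝ := (∏ c ∈ hV.toFinset, (Polynomial.X - Polynomial.C c)) ^ 2
    have hPV : ∀ t, P.eval t = (∏ c ∈ hV.toFinset, (t - c)) ^ 2 := by
      intro t
      simp [P, Polynomial.eval_prod]
    have hP0 : ∫ a, ∫ b, P.eval (Mq q ν a b) ∂ν ∂ν = 0 := by
      refine integral_eq_zero_of_ae (hrangeAe.mono fun a ha => ?_)
      refine integral_eq_zero_of_ae (hrangeAe.mono fun b hb => ?_)
      simp only [hPV, Pi.zero_apply]
      rw [Finset.prod_eq_zero (i := Mq q ν a b) (hV.mem_toFinset.2 ⟨a, ha, b, hb, rfl⟩) (sub_self _)]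
      simp
    have hP1 : ∫ a, ∫ b, P.eval (Mq q nu0 a b) ∂nu0 ∂nu0 = 0 := by
      rw [← hP0, integral_poly_Mq q hν, integral_poly_Mq q nu0_restrict]
      simp only [hT]
    have hM := continuous_Mq q nu0_restrict
    have hPM : Continuous fun p : ℝ × ℝ => P.eval (Mq q nu0 p.1 p.2) := P.continuous.comp hM
    have hnn : ∀ t, 0 ≤ P.eval t := fun t => by rw [hPV]; positivity
    have hz : ∀ a ∈ Set.Icc (0 : ℝ) 1, ∀ b ∈ Set.Icc (0 : ℝ) 1, P.eval (Mq q nu0 a b) = 0 := by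
      intro a ha
      refine eq_zero_of_int (h := fun b => P.eval (Mq q nu0 a b))
        (cont_right (G := fun a b => P.eval (Mq q nu0 a b)) hPM a) (fun b => hnn _) ?_
      exact eq_zero_of_int (h := fun a => ∫ b, P.eval (Mq q nu0 a b) ∂nu0)
        (continuous_int nu0_restrict (G := fun a b => P.eval (Mq q nu0 a b)) hPM)
        (fun a => integral_nonneg fun b => hnn _) hP1 a ha
    let S : Set ℝ := (fun p : ℝ × ℝ => Mq q nu0 p.1 p.2) '' (Set.Icc 0 1 ×ˢ Set.Icc 0 1)
    have hSfin : S.Finite := by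
      refine hV.subset ?_
      rintro _ ⟨⟨a, b⟩, ⟨ha, hb⟩, rfl⟩
      have := hz a ha b hb
      rw [hPV, pow_eq_zero_iff two_ne_zero, Finset.prod_eq_zero_iff] at this
      obtain ⟨c, hc, hceq⟩ := this
      rw [sub_eq_zero] at hceq
      simp only [hceq]
      exact hV.mem_toFinset.1 hc
    have hSpre : IsPreconnected S :=
      (isPreconnected_Icc.prod isPreconnected_Icc).image _ hM.continuousOn
    have hSsub : S.Subsingleton := by
      by_contra h
      exact hSpre.infinite_of_nontrivial (Set.not_subsingleton_iff.1 h) hSfin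
    refine hnc (q_const q hsym (Mq q nu0 0 0) fun a ha b hb => ?_)
    exact hSsub ⟨(a, b), ⟨ha, hb⟩, rfl⟩ ⟨(0, 0), ⟨by simp, by simp⟩, rfl⟩
  · refine ⟨?_, fun x _ y _ => hsym _ _, 1, fun x _ y _ => ?_⟩
    · exact measurable_q q (hf.comp measurable_fst) (hf.comp measurable_snd)
    · have := hrange _ (hf01 x) _ (hf01 y)
      rw [abs_of_nonneg this.1]
      exact this.2
  · intro i
    rw [hid, homDensity_eq q _ hf]
    exact hD i ν nu0 hν nu0_restrict fun j hj =>
      hcongr j (hj.trans (Finset.le_sup (f := D) (Finset.mem_univ i)))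
end
end
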